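/- arXiv:1411.2100 — 10 statements merged into one kernel-verified Lean document; each statement's English description precedes it below -/
import Mathlib

section
/- Assume hypothesis (C). Let M ∈ ℕ, let A_1, …, A_M ∈ 𝐍 with ‖A_m Ω‖ = 1, and let c_1, …, c_M ∈ ℂ be such that ∑_{m=1}^M c_m ω_{A_m}(C) = 0 for every C ∈ 𝐍. Then ∑_{m=1}^M c_m A_m^* C A_m = 0 for every C ∈ 𝐍. -/
open scoped ComplexInnerProductSpace

/-!
If `X` and `Y` commute with every `A m`, then `⟪X Ω, (∑ c_m A_m^* C A_m) (Y Ω)⟫` equals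
`∑ c_m ω_{A_m}(X^* C Y)`, which vanishes when `X`, `C` and `Y` lie in the union of the algebras.
By hypothesis (C), the vectors `X Ω` for `X` in the union commuting with every `A m` span a dense
subspace, so the bounded operator `∑ c_m A_m^* C A_m` is zero.
-/

theorem eq_zero_of_forall_inner_eq_zero_of_dense_span {𝕜 E : Type*} [RCLike 𝕜]
    [NormedAddCommGroup E] [InnerProductSpace 𝕜 E] {s : Set E}
    (hs : Dense (Submodule.span 𝕜 s : Set E)) {x : E} (hx : ∀ y ∈ s, inner 𝕜 y x = 0) :
    x = 0 := by
  have hortho : Submodule.span 𝕜 s ⟂ Submodule.span 𝕜 {x} := by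
    simpa only [Submodule.isOrtho_span, Set.mem_singleton_iff, forall_eq] using hx
  exact hs.eq_zero_of_inner_right 𝕜 fun y hy =>
    Submodule.isOrtho_iff_inner_eq.mp hortho y hy x (Submodule.mem_span_singleton_self x)

theorem exists_forall_mem_of_directed {ι κ α : Type*} [Nonempty ι] [Finite κ] {s : ι → Set α}
    (hs : Directed (· ⊆ ·) s) {a : κ → α} (ha : ∀ k, a k ∈ ⋃ i, s i) :
    ∃ i, ∀ k, a k ∈ s i := by
  choose f hf using fun k => Set.mem_iUnion.mp (ha k)
  obtain ⟨i, hi⟩ := hs.finite_le f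
  exact ⟨i, fun k => hi k (hf k)⟩

theorem mul_mem_iUnion_of_directed {ι S R : Type*} [Mul R] [SetLike S R] [MulMemClass S R]
    {N : ι → S} (hN : Directed (· ⊆ ·) fun i => (N i : Set R)) {a b : R}
    (ha : a ∈ ⋃ i, (N i : Set R)) (hb : b ∈ ⋃ i, (N i : Set R)) :
    a * b ∈ ⋃ i, (N i : Set R) := by
  obtain ⟨i, hi⟩ := Set.mem_iUnion.mp ha
  obtain ⟨j, hj⟩ := Set.mem_iUnion.mp hb
  obtain ⟨k, hik, hjk⟩ := hN i j
  exact Set.mem_iUnion.mpr ⟨k, mul_mem (hik hi) (hjk hj)⟩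

theorem star_mem_iUnion {ι S R : Type*} [Star R] [SetLike S R] [StarMemClass S R]
    {N : ι → S} {a : R} (ha : a ∈ ⋃ i, (N i : Set R)) : star a ∈ ⋃ i, (N i : Set R) := by
  obtain ⟨i, hi⟩ := Set.mem_iUnion.mp ha
  exact Set.mem_iUnion.mpr ⟨i, star_mem hi⟩

section CyclicVector

variable {𝕜 H : Type*} [RCLike 𝕜] [NormedAddCommGroup H] [InnerProductSpace 𝕜 H]

/-- The vector `Ω` is cyclic for a set `S` of bounded operators: the vectors `X Ω` with `X ∈ S`
span a dense subspace. The span is part of the definition because `S` need not be a subspace. -/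
def IsCyclicVector (S : Set (H →L[𝕜] H)) (Ω : H) : Prop :=
  Dense (Submodule.span 𝕜 ((fun X => X Ω) '' S) : Set H)

theorem IsCyclicVector.eq_zero_of_forall_inner {S : Set (H →L[𝕜] H)} {Ω : H}
    (hΩ : IsCyclicVector S Ω) {T : H →L[𝕜] H}
    (hT : ∀ X ∈ S, ∀ Y ∈ S, inner 𝕜 (X Ω) (T (Y Ω)) = 0) : T = 0 := by
  refine ContinuousLinearMap.ext_on hΩ ?_
  rintro _ ⟨Y, hY, rfl⟩
  refine eq_zero_of_forall_inner_eq_zero_of_dense_span hΩ ?_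
  rintro _ ⟨X, hX, rfl⟩
  exact hT X hX Y hY

variable [CompleteSpace H]

theorem inner_star_mul_mul_apply_of_commute {A B X Y : H →L[𝕜] H} (hXA : Commute X A)
    (hYB : Commute Y B) (C : H →L[𝕜] H) (x y : H) :
    inner 𝕜 (X x) ((star A * C * B) (Y y)) = inner 𝕜 (A x) ((star X * C * Y) (B y)) := by
  have hAX : A (X x) = X (A x) := DFunLike.congr_fun hXA.eq.symm x
  have hBY : B (Y y) = Y (B y) := DFunLike.congr_fun hYB.eq.symm y
  simp only [mul_assoc, mul_apply_eq_comp, ContinuousLinearMap.star_eq_adjoint,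
    ContinuousLinearMap.adjoint_inner_right, hAX, hBY]

theorem IsCyclicVector.sum_smul_star_mul_mul_eq_zero {κ : Type*} [Fintype κ]
    {A : κ → H →L[𝕜] H} {S : Set (H →L[𝕜] H)} (hSA : ∀ X ∈ S, ∀ m, Commute X (A m)) {Ω : H}
    (hΩ : IsCyclicVector S Ω) {c : κ → 𝕜} {C : H →L[𝕜] H}
    (hC : ∀ X ∈ S, ∀ Y ∈ S,
      ∑ m, c m * inner 𝕜 (A m Ω) ((star X * C * Y) (A m Ω)) = 0) :
    ∑ m, c m • (star (A m) * C * A m) = 0 := by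
  refine hΩ.eq_zero_of_forall_inner fun X hX Y hY => ?_
  calc inner 𝕜 (X Ω) ((∑ m, c m • (star (A m) * C * A m)) (Y Ω))
      = ∑ m, c m * inner 𝕜 (X Ω) ((star (A m) * C * A m) (Y Ω)) := by
        simp only [sum_apply, smul_apply, inner_sum, inner_smul_right]
    _ = ∑ m, c m * inner 𝕜 (A m Ω) ((star X * C * Y) (A m Ω)) := by
        simp only [inner_star_mul_mul_apply_of_commute (hSA X hX _) (hSA Y hY _)]
    _ = 0 := hC X hX Y hY

theorem stmt_0_general {ι κ S : Type*} [Fintype κ] [SetLike S (H →L[𝕜] H)]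
    [MulMemClass S (H →L[𝕜] H)] [StarMemClass S (H →L[𝕜] H)] {N : ι → S}
    (hN : Directed (· ⊆ ·) fun i => (N i : Set (H →L[𝕜] H))) {Ω : H}
    (hΩ : ∀ i, IsCyclicVector
      ((⋃ j, (N j : Set (H →L[𝕜] H))) ∩ Set.centralizer (N i : Set (H →L[𝕜] H))) Ω)
    {A : κ → H →L[𝕜] H} (hA : ∀ m, A m ∈ ⋃ i, (N i : Set (H →L[𝕜] H))) {c : κ → 𝕜}
    (hvanish : ∀ C ∈ ⋃ i, (N i : Set (H →L[𝕜] H)),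
      ∑ m, c m * inner 𝕜 (A m Ω) (C (A m Ω)) = 0) :
    ∀ C ∈ ⋃ i, (N i : Set (H →L[𝕜] H)), ∑ m, c m • (star (A m) * C * A m) = 0 := by
  intro C hC
  have : Nonempty ι := (Set.mem_iUnion.mp hC).nonempty
  obtain ⟨i, hAi⟩ := exists_forall_mem_of_directed hN hA
  refine (hΩ i).sum_smul_star_mul_mul_eq_zero ?_ ?_
  · rintro X ⟨-, hX⟩ m
    exact (hX (A m) (hAi m)).symm
  · rintro X ⟨hX, -⟩ Y ⟨hY, -⟩
    have hXC := mul_mem_iUnion_of_directed hN (star_mem_iUnion hX) hC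
    exact hvanish _ (mul_mem_iUnion_of_directed hN hXC hY)

end CyclicVector

/-- Lemma 2.1 of the paper. Assume hypothesis (C). If a finite linear
combination `∑ c_m ω_{A_m}` of vector states of the funnel vanishes on the union `𝐍` of the
funnel algebras, then `∑ c_m A_m^* C A_m = 0` for every `C ∈ 𝐍`. -/
theorem stmt_0 {H : Type*} [NormedAddCommGroup H] [InnerProductSpace ℂ H] [CompleteSpace H]
    [TopologicalSpace.SeparableSpace H]
    (N : ℕ → VonNeumannAlgebra H)
    (hmono : ∀ n, (N n : Set (H →L[ℂ] H)) ⊆ (N (n + 1) : Set (H →L[ℂ] H)))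
    (Ω : H) (hΩ : ‖Ω‖ = 1)
    -- Hypothesis (C): for every `n` the span of
    -- `{X Ω : X ∈ N (n+1), X commutes with N n}` is dense in `H`.
    (hC : ∀ n : ℕ, Dense
      (Submodule.span ℂ
        {x : H | ∃ X ∈ N (n + 1), (∀ Y ∈ N n, X * Y = Y * X) ∧ x = X Ω} : Set H))
    (M : ℕ) (A : Fin M → (H →L[ℂ] H))
    (hA : ∀ m, A m ∈ ⋃ n, (N n : Set (H →L[ℂ] H)))
    (hAnorm : ∀ m, ‖A m Ω‖ = 1)
    (c : Fin M → ℂ)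
    (hvanish : ∀ C ∈ ⋃ n, (N n : Set (H →L[ℂ] H)),
      ∑ m, c m * ⟪A m Ω, C (A m Ω)⟫ = 0) :
    ∀ C ∈ ⋃ n, (N n : Set (H →L[ℂ] H)),
      ∑ m, c m • (star (A m) * C * A m) = 0 := by
  refine stmt_0_general (monotone_nat_of_le_succ hmono).directed_le (fun n => ?_) hA hvanish
  refine (hC n).mono (Submodule.span_mono ?_)
  rintro _ ⟨X, hX, hXN, rfl⟩
  exact ⟨X, ⟨Set.mem_iUnion.mpr ⟨n + 1, hX⟩, fun Y hY => (hXN Y hY).symm⟩, rfl⟩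
end

section
/- Assume hypotheses (C), (S), (E). Let A, B ∈ 𝐍 with ‖A Ω‖ = ‖B Ω‖ = 1 and suppose ω_A(C) = ω_B(C) for all C ∈ 𝐍. Then B = ⟨A Ω, B Ω⟩ • A and |⟨A Ω, B Ω⟩| = 1. Conversely, if B = t • A for some t ∈ ℂ with |t| = 1, then ω_A = ω_B. Hence ω_A ↦ {t • A : t ∈ ℂ, |t| = 1} is a well-defined bijective lift from the states {ω_A : A ∈ 𝐍, ‖AΩ‖ = 1} to normalized rays in 𝐍. -/
open scoped ComplexInnerProductSpace

/-!
Let `A, B ∈ M` induce the same state on `N ⊇ M`. Testing the two states on `X⋆ C Y`, with `X`, `Y`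
in the relative commutant of `M` in `N`, gives `⟪X Ω, (A⋆ C A) (Y Ω)⟫ = ⟪X Ω, (B⋆ C B) (Y Ω)⟫`, so
by cyclicity `A⋆ C A = B⋆ C B` as operators, for every `C ∈ N`.

Now take `C = A E⋆ E A⋆` and compress by `E`: since `E T E = ω(T) E` for `T ∈ M`, this reads
`|ω(A⋆ A)|² E⋆ E = |ω(A⋆ B)|² E⋆ E`. Hence `|⟪A Ω, B Ω⟫| = ‖A Ω‖² = ‖A Ω‖ ‖B Ω‖`, the equality case
of Cauchy–Schwarz, so `B Ω` is a multiple of `A Ω`, and `B` is the same multiple of `A` because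
`Ω` separates `M`.
-/

section

open scoped InnerProductSpace

variable {𝕜 H : Type*} [RCLike 𝕜] [NormedAddCommGroup H] [InnerProductSpace 𝕜 H]

theorem clm_ext_inner_of_dense_span {K : Type*} [NormedAddCommGroup K] [InnerProductSpace 𝕜 K]
    {s : Set H} {t : Set K} (hs : Dense (Submodule.span 𝕜 s : Set H))
    (ht : Dense (Submodule.span 𝕜 t : Set K)) {S T : H →L[𝕜] K}
    (h : ∀ x ∈ s, ∀ y ∈ t, ⟪S x, y⟫_𝕜 = ⟪T x, y⟫_𝕜) : S = T := by
  refine ContinuousLinearMap.ext_on hs fun x hx => ext_inner_right 𝕜 fun y => ?_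
  have hfunctional : innerSL 𝕜 (S x) = innerSL 𝕜 (T x) :=
    ContinuousLinearMap.ext_on ht fun y hy => h x hx y hy
  exact DFunLike.congr_fun hfunctional y

theorem eq_inner_smul_of_norm_inner_eq_one {x y : H} (hx : ‖x‖ = 1) (hy : ‖y‖ = 1)
    (hxy : ‖⟪x, y⟫_𝕜‖ = 1) : y = ⟪x, y⟫_𝕜 • x := by
  have hx₀ : x ≠ 0 := norm_ne_zero_iff.mp (hx ▸ one_ne_zero)
  have hcollinear := ((norm_inner_eq_norm_tfae 𝕜 x y).out 0 1).mp (by rw [hxy, hx, hy, one_mul])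
  simpa [inner_self_eq_norm_sq_to_K, hx] using hcollinear.resolve_left hx₀

theorem inner_smul_map_smul_of_norm_eq_one (C : H →ₗ[𝕜] H) (x : H) {t : 𝕜} (ht : ‖t‖ = 1) :
    ⟪t • x, C (t • x)⟫_𝕜 = ⟪x, C x⟫_𝕜 := by
  rw [map_smul, inner_smul_left, inner_smul_right, ← mul_assoc, RCLike.conj_mul, ht]
  simp

theorem norm_eq_norm_of_star_mul_self_eq {R : Type*} [NonUnitalNormedRing R] [StarRing R]
    [CStarRing R] {a b : R} (h : star a * a = star b * b) : ‖a‖ = ‖b‖ := by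
  rw [← mul_self_inj (norm_nonneg a) (norm_nonneg b), ← CStarRing.norm_star_mul_self, h,
    CStarRing.norm_star_mul_self]

theorem norm_eq_norm_of_compression_eq_smul {R : Type*} [NonUnitalNormedRing R] [StarRing R]
    [CStarRing R] [NormedSpace 𝕜 R] {e s t : R} {c d : 𝕜} (he : e ≠ 0) (hs : e * s * e = c • e)
    (ht : e * t * e = d • e) (hst : star s * (star e * e) * s = star t * (star e * e) * t) :
    ‖c‖ = ‖d‖ := by
  have hgram (r : R) :
      star (e * r * e) * (e * r * e) = star e * (star r * (star e * e) * r) * e := by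
    simp only [star_mul, mul_assoc]
  have hnorm : ‖c • e‖ = ‖d • e‖ := by
    rw [← hs, ← ht]
    exact norm_eq_norm_of_star_mul_self_eq (by rw [hgram, hgram, hst])
  rw [norm_smul, norm_smul] at hnorm
  exact mul_right_cancel₀ (norm_ne_zero_iff.mpr he) hnorm

variable [CompleteSpace H] {M N : StarSubalgebra 𝕜 (H →L[𝕜] H)} {Ω : H} {A B : H →L[𝕜] H}

/-- The orbit `(N ∩ M') Ω` of a vector `Ω` under the relative commutant of `M` in `N`; hypothesis
(C) says that its span is dense. -/
def relCommutantOrbit (M N : StarSubalgebra 𝕜 (H →L[𝕜] H)) (Ω : H) : Set H :=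
  {x | ∃ X ∈ N, (∀ Y ∈ M, X * Y = Y * X) ∧ x = X Ω}

theorem star_mul_mul_eq_of_state_eq
    (hC : Dense (Submodule.span 𝕜 (relCommutantOrbit M N Ω) : Set H))
    (hA : A ∈ M) (hB : B ∈ M) (hstate : ∀ C ∈ N, ⟪A Ω, C (A Ω)⟫_𝕜 = ⟪B Ω, C (B Ω)⟫_𝕜)
    {C : H →L[𝕜] H} (hCN : C ∈ N) : star A * C * A = star B * C * B := by
  refine clm_ext_inner_of_dense_span hC hC ?_
  rintro _ ⟨X, hXN, hXM, rfl⟩ _ ⟨Y, hYN, hYM, rfl⟩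
  have hcomm {S T : H →L[𝕜] H} (h : S * T = T * S) : S (T Ω) = T (S Ω) := DFunLike.congr_fun h Ω
  have htest := hstate (star X * star C * Y) (mul_mem (mul_mem (star_mem hXN) (star_mem hCN)) hYN)
  simpa [ContinuousLinearMap.star_eq_adjoint, ContinuousLinearMap.adjoint_inner_left,
    ContinuousLinearMap.adjoint_inner_right, hcomm (hXM A hA), hcomm (hXM B hB),
    hcomm (hYM A hA), hcomm (hYM B hB)] using htest

theorem norm_inner_self_eq_norm_inner_of_state_eq (hMN : M ≤ N)
    (hC : Dense (Submodule.span 𝕜 (relCommutantOrbit M N Ω) : Set H))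
    (hE : ∃ E ∈ N, E ≠ 0 ∧ ∀ C ∈ M, E * C * E = ⟪Ω, C Ω⟫_𝕜 • E) (hA : A ∈ M) (hB : B ∈ M)
    (hstate : ∀ C ∈ N, ⟪A Ω, C (A Ω)⟫_𝕜 = ⟪B Ω, C (B Ω)⟫_𝕜) :
    ‖⟪A Ω, A Ω⟫_𝕜‖ = ‖⟪A Ω, B Ω⟫_𝕜‖ := by
  obtain ⟨E, hEN, hE₀, hcompress⟩ := hE
  have hcompress_star_mul {D : H →L[𝕜] H} (hD : D ∈ M) :
      E * (star A * D) * E = ⟪A Ω, D Ω⟫_𝕜 • E := by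
    rw [hcompress _ (mul_mem (star_mem hA) hD), mul_apply_eq_comp,
      ContinuousLinearMap.star_eq_adjoint, ContinuousLinearMap.adjoint_inner_right]
  have htest : A * (star E * E) * star A ∈ N :=
    mul_mem (mul_mem (hMN hA) (mul_mem (star_mem hEN) hEN)) (star_mem (hMN hA))
  refine norm_eq_norm_of_compression_eq_smul hE₀ (hcompress_star_mul hA) (hcompress_star_mul hB) ?_
  simpa only [star_mul, star_star, mul_assoc] using
    star_mul_mul_eq_of_state_eq hC hA hB hstate htest

theorem eq_inner_smul_of_state_eq (hMN : M ≤ N)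
    (hC : Dense (Submodule.span 𝕜 (relCommutantOrbit M N Ω) : Set H))
    (hS : ∀ A ∈ M, A Ω = 0 → A = 0)
    (hE : ∃ E ∈ N, E ≠ 0 ∧ ∀ C ∈ M, E * C * E = ⟪Ω, C Ω⟫_𝕜 • E) (hA : A ∈ M) (hB : B ∈ M)
    (hAnorm : ‖A Ω‖ = 1) (hstate : ∀ C ∈ N, ⟪A Ω, C (A Ω)⟫_𝕜 = ⟪B Ω, C (B Ω)⟫_𝕜) :
    B = ⟪A Ω, B Ω⟫_𝕜 • A ∧ ‖⟪A Ω, B Ω⟫_𝕜‖ = 1 := by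
  have hBnorm : ‖B Ω‖ = 1 := by
    have hone : ⟪A Ω, A Ω⟫_𝕜 = ⟪B Ω, B Ω⟫_𝕜 := hstate 1 (one_mem N)
    rw [← hAnorm, norm_eq_sqrt_re_inner (𝕜 := 𝕜), ← hone, ← norm_eq_sqrt_re_inner]
  have hphase : ‖⟪A Ω, B Ω⟫_𝕜‖ = 1 := by
    rw [← norm_inner_self_eq_norm_inner_of_state_eq hMN hC hE hA hB hstate,
      inner_self_eq_norm_sq_to_K, hAnorm]
    simp
  have hBΩ : B Ω = ⟪A Ω, B Ω⟫_𝕜 • A Ω := eq_inner_smul_of_norm_inner_eq_one hAnorm hBnorm hphase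
  exact ⟨sub_eq_zero.mp (hS _ (sub_mem hB (M.smul_mem hA _)) (sub_eq_zero.mpr hBΩ)), hphase⟩

theorem stmt_1_general {ι : Type*} {N : ι → StarSubalgebra 𝕜 (H →L[𝕜] H)}
    (hN : Directed (· ≤ ·) N)
    (hCE : ∀ i, ∃ j, N i ≤ N j ∧
      Dense (Submodule.span 𝕜 (relCommutantOrbit (N i) (N j) Ω) : Set H) ∧
      ∃ E ∈ N j, E ≠ 0 ∧ ∀ C ∈ N i, E * C * E = ⟪Ω, C Ω⟫_𝕜 • E)
    (hS : ∀ i, ∀ A ∈ N i, A Ω = 0 → A = 0)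
    (hA : A ∈ ⋃ i, (N i : Set (H →L[𝕜] H))) (hB : B ∈ ⋃ i, (N i : Set (H →L[𝕜] H)))
    (hAnorm : ‖A Ω‖ = 1) :
    ((∀ C ∈ ⋃ i, (N i : Set (H →L[𝕜] H)), ⟪A Ω, C (A Ω)⟫_𝕜 = ⟪B Ω, C (B Ω)⟫_𝕜) →
      B = ⟪A Ω, B Ω⟫_𝕜 • A ∧ ‖⟪A Ω, B Ω⟫_𝕜‖ = 1) ∧
    (∀ t : 𝕜, ‖t‖ = 1 → B = t • A →
      ∀ C ∈ ⋃ i, (N i : Set (H →L[𝕜] H)), ⟪A Ω, C (A Ω)⟫_𝕜 = ⟪B Ω, C (B Ω)⟫_𝕜) := by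
  constructor
  · intro hstate
    obtain ⟨a, hAa⟩ := Set.mem_iUnion.mp hA
    obtain ⟨b, hBb⟩ := Set.mem_iUnion.mp hB
    obtain ⟨i, hai, hbi⟩ := hN a b
    obtain ⟨j, hij, hC, hE⟩ := hCE i
    exact eq_inner_smul_of_state_eq hij hC (hS i) hE (hai hAa) (hbi hBb) hAnorm
      fun C hCj => hstate C (Set.mem_iUnion_of_mem j hCj)
  · rintro t ht rfl C -
    exact (inner_smul_map_smul_of_norm_eq_one (C : H →ₗ[𝕜] H) (A Ω) ht).symm

end

/-- Proposition 2.2 of the paper. Under hypotheses (C), (S), (E):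
if `ω_A = ω_B` on `𝐍` then `B = ⟨AΩ, BΩ⟩ • A` with `|⟨AΩ, BΩ⟩| = 1`; conversely a
unimodular multiple `B = t • A` induces the same state.  Hence `ω_A ↦ 𝕋 A` is a
well-defined bijective lift from the states to normalized rays in `𝐍`. -/
theorem stmt_1 {H : Type*} [NormedAddCommGroup H] [InnerProductSpace ℂ H] [CompleteSpace H]
    [TopologicalSpace.SeparableSpace H]
    (N : ℕ → VonNeumannAlgebra H)
    (hmono : ∀ n, (N n : Set (H →L[ℂ] H)) ⊆ (N (n + 1) : Set (H →L[ℂ] H)))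
    (Ω : H) (hΩ : ‖Ω‖ = 1)
    -- Hypothesis (C)
    (hC : ∀ n : ℕ, Dense
      (Submodule.span ℂ
        {x : H | ∃ X ∈ N (n + 1), (∀ Y ∈ N n, X * Y = Y * X) ∧ x = X Ω} : Set H))
    -- Hypothesis (S): `Ω` is separating for each `N n`.
    (hS : ∀ n : ℕ, ∀ A ∈ N n, A Ω = 0 → A = 0)
    -- Hypothesis (E): minimal projections implementing `ω ↾ N n` inside `N (n+1)`.
    (hE : ∀ n : ℕ, ∃ E : H →L[ℂ] H, E ∈ N (n + 1) ∧ E ≠ 0 ∧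
      IsSelfAdjoint E ∧ IsIdempotentElem E ∧
      ∀ C ∈ N n, E * C * E = ⟪Ω, C Ω⟫ • E)
    (A B : H →L[ℂ] H)
    (hA : A ∈ ⋃ n, (N n : Set (H →L[ℂ] H)))
    (hB : B ∈ ⋃ n, (N n : Set (H →L[ℂ] H)))
    (hAnorm : ‖A Ω‖ = 1) (hBnorm : ‖B Ω‖ = 1) :
    ((∀ C ∈ ⋃ n, (N n : Set (H →L[ℂ] H)),
        ⟪A Ω, C (A Ω)⟫ = ⟪B Ω, C (B Ω)⟫) →
      B = ⟪A Ω, B Ω⟫ • A ∧ ‖⟪A Ω, B Ω⟫‖ = 1) ∧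
    (∀ t : ℂ, ‖t‖ = 1 → B = t • A →
      ∀ C ∈ ⋃ n, (N n : Set (H →L[ℂ] H)),
        ⟪A Ω, C (A Ω)⟫ = ⟪B Ω, C (B Ω)⟫) := by
  refine stmt_1_general (N := fun n => (N n).toStarSubalgebra)
    (monotone_nat_of_le_succ hmono).directed_le (fun n => ⟨n + 1, hmono n, hC n, ?_⟩)
    hS hA hB hAnorm
  exact (hE n).imp fun E ⟨hEN, hE₀, _, _, hcompress⟩ => ⟨hEN, hE₀, hcompress⟩
end

section
/- Assume hypotheses (C), (S), (E). Fix n ∈ ℕ and let A_m ∈ N n, m ∈ ℕ, be a sequence with sup_m ‖A_m‖ < ∞ and ‖A_m Ω‖ = 1 such that (ω_{A_m})_{m∈ℕ} is a Cauchy sequence with respect to the norm ‖φ‖ = sup{|φ(C)| : C ∈ 𝐍, ‖C‖ ≤ 1}. Then there exist complex numbers t_m with |t_m| = 1 and an operator A ∈ N n with ‖A Ω‖ = 1 such that t_m • A_m converges to A in the strong operator topology and ‖ω_{A_m} − ω_A‖ → 0. -/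
open scoped ComplexInnerProductSpace

open Filter Topology

/-!
If `X` commutes with all `A i`, then
`⟪A i (X Ω), C (A i (X Ω))⟫ = ⟪A i Ω, (X* C X) (A i Ω)⟫`. Hence, by density (C) and boundedness, the
functionals `C ↦ ⟪A i x, C (A i x)⟫` are norm-Cauchy for every vector `x` as soon as they are for
`x = Ω`. Take for `x` a unit vector `ξ = E ξ` in the range of the projection of (E). The test
operator `C = A i E (A i)*` gives `⟪A j ξ, C (A j ξ)⟫ = |⟪A i Ω, A j Ω⟫|²`, so these overlaps tend
to `1`.

Unit vectors whose overlaps tend to `1` become Cauchy once their phases are chosen so that the inner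
products with one fixed, late member of the family are nonnegative. Density (C), used again, turns
convergence of `t i • A i` at `Ω` into strong convergence.
-/

section CauchyFamilies

variable {ι X α : Type*} {l : Filter ι}

lemma cauchy_map_iff_tendsto_dist [l.NeBot] [PseudoMetricSpace α] {u : ι → α} :
    Cauchy (l.map u) ↔ Tendsto (fun p : ι × ι ↦ dist (u p.1) (u p.2)) (l ×ˢ l) (𝓝 0) :=
  cauchy_map_iff'.trans tendsto_uniformity_iff_dist_tendsto_zero

lemma isClosed_setOf_cauchy_map_of_equicontinuous [l.NeBot] [TopologicalSpace X] [UniformSpace α]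
    {F : ι → X → α} (hF : Equicontinuous F) : IsClosed {x | Cauchy (l.map (F · x))} := by
  simp only [cauchy_map_iff']
  refine closure_subset_iff_isClosed.1 fun x hx U hU ↦ ?_
  obtain ⟨V, hV, hVsymm, hVU⟩ := comp_comp_symm_mem_uniformity_sets hU
  obtain ⟨y, hFxy, hy⟩ := mem_closure_iff_nhds.1 hx _ (hF x V hV)
  change ∀ᶠ p in l ×ˢ l, (F p.1 x, F p.2 x) ∈ U
  filter_upwards [hy hV] with p hp
  exact hVU ⟨_, ⟨_, hFxy p.1, hp⟩, hVsymm.symm _ _ (hFxy p.2)⟩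

variable {𝕜 E F : Type*} [NontriviallyNormedField 𝕜] [NormedAddCommGroup E] [NormedSpace 𝕜 E]
  [NormedAddCommGroup F] [NormedSpace 𝕜 F]

lemma equicontinuous_of_forall_norm_le {A : ι → E →L[𝕜] F} {K : ℝ} (hA : ∀ i, ‖A i‖ ≤ K) :
    Equicontinuous fun i x ↦ A i x := by
  have h_iff : Equicontinuous (fun i x ↦ A i x) ↔ ∃ C, ∀ i, ‖A i‖ ≤ C :=
    (NormedSpace.equicontinuous_TFAE A).out 1 5
  exact h_iff.2 ⟨K, hA⟩

lemma exists_tendsto_apply_of_cauchy_map [CompleteSpace F] [l.NeBot] {A : ι → E →L[𝕜] F} {K : ℝ}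
    (hA : ∀ i, ‖A i‖ ≤ K) (hcauchy : ∀ x, Cauchy (l.map fun i ↦ A i x)) :
    ∃ B : E →L[𝕜] F, ∀ x, Tendsto (fun i ↦ A i x) l (𝓝 (B x)) := by
  choose B hB using fun x ↦ cauchy_map_iff_exists_tendsto.1 (hcauchy x)
  have hbdd : Bornology.IsBounded (Set.range A) :=
    isBounded_iff_forall_norm_le.2 ⟨K, Set.forall_mem_range.2 hA⟩
  exact ⟨ContinuousLinearMap.ofTendstoOfBoundedRange B A (tendsto_pi_nhds.2 hB) hbdd, hB⟩

end CauchyFamilies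

section UnitVectors

variable {𝕜 E ι : Type*} [RCLike 𝕜] [NormedAddCommGroup E] [InnerProductSpace 𝕜 E]

lemma exists_norm_sub_smul_eq_sqrt {x y : E} (hx : ‖x‖ = 1) (hy : ‖y‖ = 1) :
    ∃ c : 𝕜, ‖c‖ = 1 ∧ ‖x - c • y‖ = √(2 - 2 * ‖inner 𝕜 x y‖) := by
  obtain ⟨c, hc, hcxy⟩ := RCLike.exists_norm_eq_mul_self (inner 𝕜 x y)
  have hsq : ‖x - c • y‖ ^ 2 = 2 - 2 * ‖inner 𝕜 x y‖ := by
    rw [norm_sub_sq (𝕜 := 𝕜), inner_smul_right, ← hcxy, norm_smul, hc, hx, hy, RCLike.ofReal_re]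
    ring
  exact ⟨c, hc, by rw [← hsq, Real.sqrt_sq (norm_nonneg _)]⟩

lemma norm_sub_le_of_inner_eq_ofReal {e x y : E} {r s : ℝ} (he : ‖e‖ = 1) (hx : ‖x‖ = 1)
    (hy : ‖y‖ = 1) (hex : inner 𝕜 e x = r) (hey : inner 𝕜 e y = s) (hr : 0 ≤ r)
    (hs : 1 / 2 ≤ s) : ‖x - y‖ ≤ 5 * √(2 - 2 * ‖inner 𝕜 x y‖) := by
  obtain ⟨c, hc, hδ⟩ := exists_norm_sub_smul_eq_sqrt (𝕜 := 𝕜) hx hy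
  rw [← hδ]
  have hs₀ : 0 ≤ s := by linarith
  have hrcs : ‖(r : 𝕜) - c * s‖ ≤ ‖x - c • y‖ := by
    simpa [inner_sub_right, inner_smul_right, hex, hey, he] using
      norm_inner_le_norm (𝕜 := 𝕜) e (x - c • y)
  have hrs : |r - s| ≤ ‖x - c • y‖ := by
    refine le_trans ?_ hrcs
    simpa [hc, abs_of_nonneg hr, abs_of_nonneg hs₀] using abs_norm_sub_norm_le (r : 𝕜) (c * s)
  have hc_sub_one : ‖c - 1‖ * s ≤ 2 * ‖x - c • y‖ :=
    calc ‖c - 1‖ * s = ‖((r - s : ℝ) : 𝕜) - (r - c * s)‖ := by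
          rw [← RCLike.norm_of_nonneg (K := 𝕜) hs₀, ← norm_mul, RCLike.norm_of_nonneg hs₀]
          push_cast
          ring_nf
      _ ≤ |r - s| + ‖(r : 𝕜) - c * s‖ := by
          simpa only [RCLike.norm_ofReal] using norm_sub_le ((r - s : ℝ) : 𝕜) (r - c * s)
      _ ≤ 2 * ‖x - c • y‖ := by linarith
  calc ‖x - y‖ = ‖(x - c • y) + (c - 1) • y‖ := by rw [sub_smul, one_smul]; abel_nf
    _ ≤ ‖x - c • y‖ + ‖c - 1‖ := by
        simpa only [norm_smul, hy, mul_one] using norm_add_le (x - c • y) ((c - 1) • y)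
    _ ≤ 5 * ‖x - c • y‖ := by nlinarith [norm_nonneg (c - 1)]

lemma exists_unimodular_smul_cauchy {l : Filter ι} [l.NeBot] {a : ι → E} (ha : ∀ i, ‖a i‖ = 1)
    (h : Tendsto (fun p : ι × ι ↦ ‖inner 𝕜 (a p.1) (a p.2)‖) (l ×ˢ l) (𝓝 1)) :
    ∃ t : ι → 𝕜, (∀ i, ‖t i‖ = 1) ∧ Cauchy (l.map fun i ↦ t i • a i) := by
  have h_half : ∀ᶠ p in l ×ˢ l, 1 / 2 ≤ ‖inner 𝕜 (a p.1) (a p.2)‖ :=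
    h.eventually_const_le (by norm_num)
  obtain ⟨k, hk⟩ := h_half.curry.exists
  choose t ht htk using fun i ↦ RCLike.exists_norm_eq_mul_self (inner 𝕜 (a k) (a i))
  have hta i : ‖t i • a i‖ = 1 := by rw [norm_smul, ht, ha, one_mul]
  have hkta i : inner 𝕜 (a k) (t i • a i) = (‖inner 𝕜 (a k) (a i)‖ : 𝕜) := by
    rw [inner_smul_right, htk]
  have hinner i j : ‖inner 𝕜 (t i • a i) (t j • a j)‖ = ‖inner 𝕜 (a i) (a j)‖ := by
    simp only [inner_smul_left, inner_smul_right, norm_mul, RCLike.norm_conj, ht, one_mul]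
  refine ⟨t, ht, cauchy_map_iff_tendsto_dist.2 (squeeze_zero' (.of_forall fun _ ↦ dist_nonneg)
    (g := fun p ↦ 5 * √(2 - 2 * ‖inner 𝕜 (a p.1) (a p.2)‖)) ?_ ?_)⟩
  · filter_upwards [(tendsto_snd (f := l) (g := l)).eventually hk] with p hp
    rw [dist_eq_norm, ← hinner]
    exact norm_sub_le_of_inner_eq_ofReal (ha k) (hta _) (hta _) (hkta _) (hkta _)
      (norm_nonneg _) hp
  · simpa using ((h.const_mul 2).const_sub 2).sqrt.const_mul 5

end UnitVectors

section VectorFunctional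

variable {H : Type*} [NormedAddCommGroup H] [InnerProductSpace ℂ H]

lemma norm_inner_map_sub_inner_map_le (C : H →L[ℂ] H) (x y : H) :
    ‖⟪x, C x⟫ - ⟪y, C y⟫‖ ≤ (‖x‖ + ‖y‖) * ‖x - y‖ * ‖C‖ :=
  calc ‖⟪x, C x⟫ - ⟪y, C y⟫‖ = ‖⟪x, C (x - y)⟫ + ⟪x - y, C y⟫‖ := by
        rw [map_sub, inner_sub_left, inner_sub_right, sub_add_sub_cancel]
    _ ≤ ‖x‖ * (‖C‖ * ‖x - y‖) + ‖x - y‖ * (‖C‖ * ‖y‖) := by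
        refine norm_add_le_of_le (norm_inner_le_norm _ _ |>.trans ?_)
          (norm_inner_le_norm _ _ |>.trans ?_) <;> gcongr <;> exact C.le_opNorm _
    _ = (‖x‖ + ‖y‖) * ‖x - y‖ * ‖C‖ := by ring

variable [CompleteSpace H]

/-- The functional `C ↦ ⟪x, C x⟫` on a `*`-algebra `S` of operators. With `x = A Ω` it is the state
`ω_A`, and its norm as a functional on `S` is the supremum over the unit ball of `S`. -/
noncomputable def vectorFunctional (S : StarSubalgebra ℂ (H →L[ℂ] H)) (x : H) : StrongDual ℂ S :=
  innerSL ℂ x ∘L ContinuousLinearMap.apply ℂ H x ∘L S.toSubalgebra.toSubmodule.subtypeL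

variable {S : StarSubalgebra ℂ (H →L[ℂ] H)}

@[simp]
lemma vectorFunctional_apply (x : H) (C : S) :
    vectorFunctional S x C = ⟪x, (C : H →L[ℂ] H) x⟫ := rfl

lemma norm_vectorFunctional_sub_le (x y : H) :
    ‖vectorFunctional S x - vectorFunctional S y‖ ≤ (‖x‖ + ‖y‖) * ‖x - y‖ :=
  ContinuousLinearMap.opNorm_le_bound _ (by positivity)
    fun C ↦ norm_inner_map_sub_inner_map_le (C : H →L[ℂ] H) x y

lemma continuous_vectorFunctional : Continuous (vectorFunctional S) :=
  continuous_iff_continuousAt.2 fun x ↦ by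
    refine tendsto_iff_norm_sub_tendsto_zero.2 (squeeze_zero (fun _ ↦ norm_nonneg _)
      (fun y ↦ norm_vectorFunctional_sub_le y x) ?_)
    exact Continuous.tendsto' (by fun_prop) _ _ (by simp)

lemma vectorFunctional_smul_of_norm_eq_one {t : ℂ} (ht : ‖t‖ = 1) (x : H) :
    vectorFunctional S (t • x) = vectorFunctional S x := by
  ext C
  rw [vectorFunctional_apply, vectorFunctional_apply, map_smul, inner_smul_left, inner_smul_right,
    ← mul_assoc, RCLike.conj_mul, ht, RCLike.ofReal_one, one_pow, one_mul]

lemma norm_vectorFunctional_map_sub_le {X : H →L[ℂ] H} (hX : X ∈ S) (x y : H) :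
    ‖vectorFunctional S (X x) - vectorFunctional S (X y)‖ ≤
      ‖X‖ ^ 2 * ‖vectorFunctional S x - vectorFunctional S y‖ := by
  refine ContinuousLinearMap.opNorm_le_bound _ (by positivity) fun C ↦ ?_
  let D : S := ⟨star X * C * X, mul_mem (mul_mem (star_mem hX) C.2) hX⟩
  have hD z : vectorFunctional S (X z) C = vectorFunctional S z D :=
    (ContinuousLinearMap.adjoint_inner_right X z ((C : H →L[ℂ] H) (X z))).symm
  have hD_norm : ‖D‖ ≤ ‖X‖ ^ 2 * ‖C‖ :=
    calc ‖star X * C * X‖ ≤ ‖star X‖ * ‖C‖ * ‖X‖ := norm_mul₃_le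
      _ = ‖X‖ ^ 2 * ‖C‖ := by rw [norm_star]; ring
  calc ‖(vectorFunctional S (X x) - vectorFunctional S (X y)) C‖
      = ‖(vectorFunctional S x - vectorFunctional S y) D‖ := by
        simp only [sub_apply, hD]
    _ ≤ ‖vectorFunctional S x - vectorFunctional S y‖ * ‖D‖ := ContinuousLinearMap.le_opNorm _ _
    _ ≤ ‖X‖ ^ 2 * ‖vectorFunctional S x - vectorFunctional S y‖ * ‖C‖ := by
        rw [mul_comm (‖X‖ ^ 2), mul_assoc]
        gcongr

lemma equicontinuous_vectorFunctional_apply {ι : Type*} {A : ι → H →L[ℂ] H} {K : ℝ}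
    (hA : ∀ i, ‖A i‖ ≤ K) : Equicontinuous fun i x ↦ vectorFunctional S (A i x) := fun x ↦ by
  refine Metric.equicontinuousAt_of_continuity_modulus
    (fun y ↦ (K * ‖x‖ + K * ‖y‖) * (K * ‖x - y‖)) ?_ _ (.of_forall fun y i ↦ ?_)
  · exact Continuous.tendsto' (by fun_prop) _ _ (by simp)
  · rw [dist_eq_norm]
    refine (norm_vectorFunctional_sub_le _ _).trans ?_
    rw [← map_sub]
    have hK : 0 ≤ K := (norm_nonneg _).trans (hA i)
    gcongr <;> exact (A i).le_of_opNorm_le (hA i) _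

end VectorFunctional

section RelativeCommutant

variable {H : Type*} [NormedAddCommGroup H] [InnerProductSpace ℂ H] [CompleteSpace H]

/-- The subspace `(M' ∩ S) Ω` of all `X Ω` with `X` in the relative commutant of `M` in `S`.
Hypothesis (C) says that it is dense for `M = N n` and `S = N (n + 1)`. -/
noncomputable def relativeCommutantOrbit (M : Set (H →L[ℂ] H)) (S : StarSubalgebra ℂ (H →L[ℂ] H))
    (Ω : H) : Submodule ℂ H :=
  (Subalgebra.toSubmodule (S.toSubalgebra ⊓ Subalgebra.centralizer ℂ M)).map
    (ContinuousLinearMap.apply ℂ H Ω).toLinearMap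

variable {M : Set (H →L[ℂ] H)} {S : StarSubalgebra ℂ (H →L[ℂ] H)} {Ω : H}

lemma mem_relativeCommutantOrbit {x : H} :
    x ∈ relativeCommutantOrbit M S Ω ↔ ∃ X ∈ S, (∀ Y ∈ M, X * Y = Y * X) ∧ x = X Ω := by
  simp [relativeCommutantOrbit, Subalgebra.mem_centralizer_iff, and_assoc, eq_comm]

variable {ι : Type*} {l : Filter ι} [l.NeBot] {A : ι → H →L[ℂ] H} {K : ℝ}

lemma cauchy_map_apply_of_dense_relativeCommutantOrbit
    (hdense : Dense (relativeCommutantOrbit M S Ω : Set H)) (hA : ∀ i, A i ∈ M)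
    (hK : ∀ i, ‖A i‖ ≤ K) (hΩ : Cauchy (l.map fun i ↦ A i Ω)) (x : H) :
    Cauchy (l.map fun i ↦ A i x) := by
  refine closure_minimal ?_ (isClosed_setOf_cauchy_map_of_equicontinuous
    (equicontinuous_of_forall_norm_le hK)) (hdense x)
  rintro _ hx
  obtain ⟨X, -, hX, rfl⟩ := mem_relativeCommutantOrbit.1 hx
  have hAX i : A i (X Ω) = X (A i Ω) := (DFunLike.congr_fun (hX _ (hA i)) Ω).symm
  simp only [Set.mem_ofPred_eq, hAX]
  exact hΩ.map X.uniformContinuous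

lemma cauchy_map_vectorFunctional_apply_of_dense_relativeCommutantOrbit
    (hdense : Dense (relativeCommutantOrbit M S Ω : Set H)) (hA : ∀ i, A i ∈ M)
    (hK : ∀ i, ‖A i‖ ≤ K) (hΩ : Cauchy (l.map fun i ↦ vectorFunctional S (A i Ω))) (x : H) :
    Cauchy (l.map fun i ↦ vectorFunctional S (A i x)) := by
  refine closure_minimal ?_ (isClosed_setOf_cauchy_map_of_equicontinuous
    (equicontinuous_vectorFunctional_apply hK)) (hdense x)
  rintro _ hx
  obtain ⟨X, hXS, hX, rfl⟩ := mem_relativeCommutantOrbit.1 hx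
  have hAX i : A i (X Ω) = X (A i Ω) := (DFunLike.congr_fun (hX _ (hA i)) Ω).symm
  simp only [Set.mem_ofPred_eq, hAX]
  rw [cauchy_map_iff_tendsto_dist] at hΩ ⊢
  refine squeeze_zero (fun _ ↦ dist_nonneg) (fun p ↦ ?_) (by simpa using hΩ.const_mul (‖X‖ ^ 2))
  simpa only [dist_eq_norm] using norm_vectorFunctional_map_sub_le hXS _ _

end RelativeCommutant

section Overlap

variable {H : Type*} [NormedAddCommGroup H] [InnerProductSpace ℂ H]

lemma exists_norm_eq_one_map_eq_self {E : H →L[ℂ] H} (hE₀ : E ≠ 0) (hE : IsIdempotentElem E) :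
    ∃ ξ, ‖ξ‖ = 1 ∧ E ξ = ξ := by
  obtain ⟨v, hv⟩ := DFunLike.ne_iff.1 hE₀
  refine ⟨(‖E v‖⁻¹ : ℂ) • E v, norm_smul_inv_norm hv, ?_⟩
  rw [map_smul, ← mul_apply_eq_comp, hE.eq]

variable [CompleteSpace H]

lemma inner_map_compression_eq_norm_sq {E Y : H →L[ℂ] H} {c : ℂ} {ξ : H} (hE : IsSelfAdjoint E)
    (hEYE : E * Y * E = c • E) (hξ : ‖ξ‖ = 1) (hEξ : E ξ = ξ) :
    ⟪Y ξ, E (Y ξ)⟫ = (‖c‖ : ℂ) ^ 2 := by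
  have hEY : E (Y ξ) = c • ξ := by simpa [hEξ] using DFunLike.congr_fun hEYE ξ
  calc ⟪Y ξ, E (Y ξ)⟫ = c * ⟪Y ξ, E ξ⟫ := by rw [hEY, inner_smul_right, hEξ]
    _ = c * ⟪c • ξ, ξ⟫ := by rw [← hEY]; exact congrArg (c * ·) (hE.isSymmetric (Y ξ) ξ).symm
    _ = (‖c‖ : ℂ) ^ 2 := by
      rw [inner_smul_left, inner_self_eq_norm_sq_to_K, hξ, ← Complex.mul_conj']; simp

variable {M S : StarSubalgebra ℂ (H →L[ℂ] H)} {Ω ξ : H} {E : H →L[ℂ] H}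

lemma abs_norm_inner_sq_sub_one_le {A B : H →L[ℂ] H} (hMS : M ≤ S) (hES : E ∈ S)
    (hE : IsSelfAdjoint E) (hEM : ∀ C ∈ M, E * C * E = ⟪Ω, C Ω⟫ • E) (hξ : ‖ξ‖ = 1)
    (hEξ : E ξ = ξ) (hA : A ∈ M) (hB : B ∈ M) (hAΩ : ‖A Ω‖ = 1) :
    |‖⟪A Ω, B Ω⟫‖ ^ 2 - 1| ≤
      ‖A‖ ^ 2 * ‖E‖ * ‖vectorFunctional S (A ξ) - vectorFunctional S (B ξ)‖ := by
  let D : S := ⟨A * E * star A, mul_mem (mul_mem (hMS hA) hES) (star_mem (hMS hA))⟩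
  have hD {Z} (hZ : Z ∈ M) : vectorFunctional S (Z ξ) D = (‖⟪A Ω, Z Ω⟫‖ : ℂ) ^ 2 := by
    have hΩ : ⟪Ω, (star A * Z) Ω⟫ = ⟪A Ω, Z Ω⟫ := ContinuousLinearMap.adjoint_inner_right A _ _
    rw [← hΩ, ← inner_map_compression_eq_norm_sq hE (hEM _ (mul_mem (star_mem hA) hZ)) hξ hEξ]
    exact (ContinuousLinearMap.adjoint_inner_left A _ _).symm
  have hD_norm : ‖D‖ ≤ ‖A‖ ^ 2 * ‖E‖ :=
    calc ‖A * E * star A‖ ≤ ‖A‖ * ‖E‖ * ‖star A‖ := norm_mul₃_le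
      _ = ‖A‖ ^ 2 * ‖E‖ := by rw [norm_star]; ring
  have hAA : ‖⟪A Ω, A Ω⟫‖ = 1 := by simp [inner_self_eq_norm_sq_to_K, hAΩ]
  calc |‖⟪A Ω, B Ω⟫‖ ^ 2 - 1|
      = ‖(vectorFunctional S (A ξ) - vectorFunctional S (B ξ)) D‖ := by
        rw [sub_apply, hD hA, hD hB, hAA, norm_sub_rev, Complex.ofReal_one, one_pow]
        norm_cast
    _ ≤ ‖vectorFunctional S (A ξ) - vectorFunctional S (B ξ)‖ * ‖D‖ :=
        ContinuousLinearMap.le_opNorm _ _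
    _ ≤ _ := by rw [mul_comm]; gcongr

lemma tendsto_norm_inner_of_cauchy_map_vectorFunctional {ι : Type*} {l : Filter ι} [l.NeBot]
    {A : ι → H →L[ℂ] H} {K : ℝ} (hMS : M ≤ S)
    (hdense : Dense (relativeCommutantOrbit M S Ω : Set H)) (hES : E ∈ S) (hE₀ : E ≠ 0)
    (hE : IsStarProjection E) (hEM : ∀ C ∈ M, E * C * E = ⟪Ω, C Ω⟫ • E) (hA : ∀ i, A i ∈ M)
    (hK : ∀ i, ‖A i‖ ≤ K) (hAΩ : ∀ i, ‖A i Ω‖ = 1)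
    (hcauchy : Cauchy (l.map fun i ↦ vectorFunctional S (A i Ω))) :
    Tendsto (fun p : ι × ι ↦ ‖⟪A p.1 Ω, A p.2 Ω⟫‖) (l ×ˢ l) (𝓝 1) := by
  obtain ⟨ξ, hξ, hEξ⟩ := exists_norm_eq_one_map_eq_self hE₀ hE.isIdempotentElem
  have hcauchyξ := cauchy_map_iff_tendsto_dist.1 <|
    cauchy_map_vectorFunctional_apply_of_dense_relativeCommutantOrbit hdense hA hK hcauchy ξ
  have hsq : Tendsto (fun p : ι × ι ↦ ‖⟪A p.1 Ω, A p.2 Ω⟫‖ ^ 2) (l ×ˢ l) (𝓝 1) := by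
    refine tendsto_iff_dist_tendsto_zero.2 (squeeze_zero (fun _ ↦ dist_nonneg) (fun p ↦ ?_)
      (by simpa using hcauchyξ.const_mul (K ^ 2 * ‖E‖)))
    rw [Real.dist_eq, dist_eq_norm]
    refine (abs_norm_inner_sq_sub_one_le hMS hES hE.isSelfAdjoint hEM hξ hEξ (hA p.1) (hA p.2)
      (hAΩ p.1)).trans ?_
    gcongr
    exact hK p.1
  simpa using hsq.sqrt

end Overlap

lemma mem_vonNeumannAlgebra_of_tendsto_apply {H ι : Type*} [NormedAddCommGroup H]
    [InnerProductSpace ℂ H] [CompleteSpace H] {M : VonNeumannAlgebra H} {l : Filter ι} [l.NeBot]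
    {A : ι → H →L[ℂ] H} {B : H →L[ℂ] H} (hA : ∀ i, A i ∈ M)
    (hB : ∀ x, Tendsto (fun i ↦ A i x) l (𝓝 (B x))) : B ∈ M := by
  rw [← M.commutant_commutant, VonNeumannAlgebra.mem_commutant_iff]
  intro T hT
  ext x
  have hTA i : A i (T x) = T (A i x) :=
    DFunLike.congr_fun (VonNeumannAlgebra.mem_commutant_iff.1 hT _ (hA i)) x
  have hTB : Tendsto (fun i ↦ A i (T x)) l (𝓝 (T (B x))) := by
    simpa only [hTA, Function.comp_def] using (T.continuous.tendsto _).comp (hB x)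
  exact tendsto_nhds_unique hTB (hB (T x))

section DualNorm

variable {H ι : Type*} [NormedAddCommGroup H] [InnerProductSpace ℂ H] [CompleteSpace H]
  [Preorder ι] [IsDirectedOrder ι] [Nonempty ι]

lemma cauchySeq_vectorFunctional_of_forall_le {S : StarSubalgebra ℂ (H →L[ℂ] H)} {a : ι → H}
    (h : ∀ ε : ℝ, 0 < ε → ∃ k, ∀ i ≥ k, ∀ j ≥ k, ∀ C ∈ S, ‖C‖ ≤ 1 →
      ‖⟪a i, C (a i)⟫ - ⟪a j, C (a j)⟫‖ ≤ ε) :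
    CauchySeq fun i ↦ vectorFunctional S (a i) := by
  refine cauchy_map_iff'.2 (Metric.uniformity_basis_dist_le.tendsto_right_iff.2 fun ε hε ↦ ?_)
  rw [prod_atTop_atTop_eq, eventually_atTop_prod_self']
  obtain ⟨k, hk⟩ := h ε hε
  refine ⟨k, fun i hi j hj ↦ ?_⟩
  rw [Set.mem_ofPred_eq, dist_eq_norm]
  exact ContinuousLinearMap.opNorm_le_of_unit_norm hε.le fun C hC ↦ hk i hi j hj C C.2 hC.le

lemma forall_le_of_tendsto_vectorFunctional {a : ι → H} {b : H}
    (h : Tendsto (fun i ↦ vectorFunctional ⊤ (a i)) atTop (𝓝 (vectorFunctional ⊤ b))) {ε : ℝ}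
    (hε : 0 < ε) :
    ∃ k, ∀ i ≥ k, ∀ C : H →L[ℂ] H, ‖C‖ ≤ 1 → ‖⟪a i, C (a i)⟫ - ⟪b, C b⟫‖ ≤ ε := by
  refine (eventually_atTop.1 (Metric.tendsto_nhds.1 h ε hε)).imp fun k hk i hi C hC ↦ ?_
  rw [← mul_one ε]
  refine ContinuousLinearMap.le_of_opNorm_le_of_le
    (vectorFunctional ⊤ (a i) - vectorFunctional ⊤ b) ?_ (x := ⟨C, trivial⟩) hC
  simpa only [dist_eq_norm] using (hk i hi).le

end DualNorm

theorem stmt_2_general {H ι : Type*} [NormedAddCommGroup H] [InnerProductSpace ℂ H]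
    [CompleteSpace H] [Preorder ι] [IsDirectedOrder ι] [Nonempty ι] (M : VonNeumannAlgebra H)
    (S : StarSubalgebra ℂ (H →L[ℂ] H)) (hMS : M.toStarSubalgebra ≤ S) (Ω : H)
    (hC : Dense (Submodule.span ℂ
      {x : H | ∃ X ∈ S, (∀ Y ∈ M, X * Y = Y * X) ∧ x = X Ω} : Set H))
    (hE : ∃ E : H →L[ℂ] H, E ∈ S ∧ E ≠ 0 ∧ IsSelfAdjoint E ∧ IsIdempotentElem E ∧
      ∀ C ∈ M, E * C * E = ⟪Ω, C Ω⟫ • E)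
    (A : ι → H →L[ℂ] H) (hA : ∀ m, A m ∈ M) (hbdd : ∃ K : ℝ, ∀ m, ‖A m‖ ≤ K)
    (hAnorm : ∀ m, ‖A m Ω‖ = 1)
    (hcauchy : ∀ ε : ℝ, 0 < ε → ∃ k, ∀ l ≥ k, ∀ m ≥ k, ∀ C ∈ S, ‖C‖ ≤ 1 →
      ‖⟪A l Ω, C (A l Ω)⟫ - ⟪A m Ω, C (A m Ω)⟫‖ ≤ ε) :
    ∃ t : ι → ℂ, (∀ m, ‖t m‖ = 1) ∧
    ∃ B : H →L[ℂ] H, B ∈ M ∧ ‖B Ω‖ = 1 ∧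
      (∀ x : H, Tendsto (fun m ↦ (t m • A m) x) atTop (𝓝 (B x))) ∧
      (∀ ε : ℝ, 0 < ε → ∃ k, ∀ m ≥ k, ∀ C : H →L[ℂ] H, ‖C‖ ≤ 1 →
        ‖⟪A m Ω, C (A m Ω)⟫ - ⟪B Ω, C (B Ω)⟫‖ ≤ ε) := by
  obtain ⟨K, hK⟩ := hbdd
  obtain ⟨E, hES, hE₀, hE_sa, hE_idem, hEM⟩ := hE
  have hdense : Dense (relativeCommutantOrbit (M : Set (H →L[ℂ] H)) S Ω : Set H) :=
    hC.mono (Submodule.span_le.2 fun _ ↦ mem_relativeCommutantOrbit.2)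
  obtain ⟨t, ht, htA⟩ := exists_unimodular_smul_cauchy hAnorm <|
    tendsto_norm_inner_of_cauchy_map_vectorFunctional hMS hdense hES hE₀ ⟨hE_idem, hE_sa⟩ hEM hA hK
      hAnorm (cauchySeq_vectorFunctional_of_forall_le hcauchy)
  have htAM m : t m • A m ∈ M := M.toStarSubalgebra.smul_mem (hA m) (t m)
  have htAK m : ‖t m • A m‖ ≤ K := by rw [norm_smul, ht, one_mul]; exact hK m
  obtain ⟨B, hB⟩ := exists_tendsto_apply_of_cauchy_map htAK <|
    cauchy_map_apply_of_dense_relativeCommutantOrbit hdense htAM htAK htA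
  have hBΩ : ‖B Ω‖ = 1 := by
    refine tendsto_nhds_unique (hB Ω).norm ?_
    simp [norm_smul, ht, hAnorm]
  have hstate := (continuous_vectorFunctional (S := ⊤)).tendsto (B Ω) |>.comp (hB Ω)
  simp only [Function.comp_def, smul_apply,
    vectorFunctional_smul_of_norm_eq_one (ht _)] at hstate
  exact ⟨t, ht, B, mem_vonNeumannAlgebra_of_tendsto_apply htAM hB, hBΩ, hB,
    fun _ ↦ forall_le_of_tendsto_vectorFunctional hstate⟩

/-- Proposition 2.3 of the paper. Under hypotheses (C), (S), (E):
a uniformly bounded sequence `A_m ∈ N n` whose induced states form a Cauchy sequence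
in the norm induced by `𝐍` admits phase factors `t_m ∈ 𝕋` such that `t_m • A_m`
converges strongly to some `A ∈ N n`, and `ω_{A_m} → ω_A` in norm. -/
theorem stmt_2 {H : Type*} [NormedAddCommGroup H] [InnerProductSpace ℂ H] [CompleteSpace H]
    [TopologicalSpace.SeparableSpace H]
    (N : ℕ → VonNeumannAlgebra H)
    (hmono : ∀ n, (N n : Set (H →L[ℂ] H)) ⊆ (N (n + 1) : Set (H →L[ℂ] H)))
    (Ω : H) (hΩ : ‖Ω‖ = 1)
    -- Hypothesis (C)
    (hC : ∀ n : ℕ, Dense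
      (Submodule.span ℂ
        {x : H | ∃ X ∈ N (n + 1), (∀ Y ∈ N n, X * Y = Y * X) ∧ x = X Ω} : Set H))
    -- Hypothesis (S)
    (hS : ∀ n : ℕ, ∀ A ∈ N n, A Ω = 0 → A = 0)
    -- Hypothesis (E)
    (hE : ∀ n : ℕ, ∃ E : H →L[ℂ] H, E ∈ N (n + 1) ∧ E ≠ 0 ∧
      IsSelfAdjoint E ∧ IsIdempotentElem E ∧
      ∀ C ∈ N n, E * C * E = ⟪Ω, C Ω⟫ • E)
    (n : ℕ) (A : ℕ → (H →L[ℂ] H))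
    (hA : ∀ m, A m ∈ N n)
    (hbdd : ∃ K : ℝ, ∀ m, ‖A m‖ ≤ K)
    (hAnorm : ∀ m, ‖A m Ω‖ = 1)
    -- the states `ω_{A_m}` form a Cauchy sequence for the norm
    -- `‖φ‖ = sup {|φ(C)| : C ∈ 𝐍, ‖C‖ ≤ 1}`
    (hcauchy : ∀ ε : ℝ, 0 < ε → ∃ M : ℕ, ∀ l ≥ M, ∀ m ≥ M,
      ∀ C ∈ ⋃ k, (N k : Set (H →L[ℂ] H)), ‖C‖ ≤ 1 →
        ‖⟪A l Ω, C (A l Ω)⟫ - ⟪A m Ω, C (A m Ω)⟫‖ ≤ ε) :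
    ∃ t : ℕ → ℂ, (∀ m, ‖t m‖ = 1) ∧
    ∃ Alim : H →L[ℂ] H, Alim ∈ N n ∧ ‖Alim Ω‖ = 1 ∧
      (∀ x : H, Tendsto (fun m => (t m • A m) x) atTop (𝓝 (Alim x))) ∧
      (∀ ε : ℝ, 0 < ε → ∃ M : ℕ, ∀ m ≥ M,
        ∀ C ∈ ⋃ k, (N k : Set (H →L[ℂ] H)), ‖C‖ ≤ 1 →
          ‖⟪A m Ω, C (A m Ω)⟫ - ⟪Alim Ω, C (Alim Ω)⟫‖ ≤ ε) := by
  obtain ⟨t, ht, B, hBN, hBΩ, hB, hstate⟩ := stmt_2_general (N n) (N (n + 1)).toStarSubalgebra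
    (hmono n) Ω (hC n) (hE n) A hA hbdd hAnorm fun ε hε ↦ (hcauchy ε hε).imp
      fun k hk l hl m hm C hCN ↦ hk l hl m hm C (Set.mem_iUnion_of_mem (n + 1) hCN)
  exact ⟨t, ht, B, hBN, hBΩ, hB, fun ε hε ↦ (hstate ε hε).imp fun k hk m hm C _ ↦ hk m hm C⟩
end

section
/- Assume hypotheses (C), (S), (E). Let A, A_1, …, A_M ∈ 𝐍 with ‖A Ω‖ = ‖A_m Ω‖ = 1 for all m, and let p_1, …, p_M be strictly positive real numbers with ∑_{m=1}^M p_m = 1 such that ∑_{m=1}^M p_m ω_{A_m}(C) = ω_A(C) for all C ∈ 𝐍. Then ω_{A_1} = ⋯ = ω_{A_M} = ω_A; in particular, each A_m is a unimodular scalar multiple of A. Thus the states {ω_A : A ∈ 𝐍, ‖AΩ‖=1} are exactly the extreme points of their convex hull. -/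
open scoped ComplexInnerProductSpace

/-!
The heart of the matter is that domination forces proportionality. If `p ω_B ≤ ω_A` with `p > 0`,
then testing against `(D X)* (D X)` with `X` commuting with `A` and `B`, and letting `X Ω` run
through the dense set of (C), gives `p ‖D B x‖² ≤ ‖D A x‖²` for every vector `x`.
Any nonzero `ξ` in the range of the operator `E` of (E) satisfies `E C ξ = ω(C) ξ`.
For `D = 1 - A E A*` this makes `D A ξ = 0`, hence also `0 = D B ξ = (B - t A) ξ` with
`t = ⟪A Ω, B Ω⟫`. Since `F ξ = 0` forces `ω(F* F) ξ = E F* F ξ = 0`, it follows that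
`(B - t A) Ω = 0`, and `B = t A` by (S).
-/

section NormedSpace

variable {𝕜 H G : Type*} [NormedField 𝕜] [SeminormedAddCommGroup H] [NormedSpace 𝕜 H]
  [SeminormedAddCommGroup G] [NormedSpace 𝕜 G]

theorem mul_norm_sq_le_of_dense {s : Set (H →L[𝕜] H)} {Ω : H}
    (hs : Dense ((fun X : H →L[𝕜] H ↦ X Ω) '' s)) {A B : H →L[𝕜] H} {D : H →L[𝕜] G} {c : ℝ}
    (hA : ∀ X ∈ s, Commute X A) (hB : ∀ X ∈ s, Commute X B)
    (hle : ∀ X ∈ s, c * ‖D (X (B Ω))‖ ^ 2 ≤ ‖D (X (A Ω))‖ ^ 2) (x : H) :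
    c * ‖D (B x)‖ ^ 2 ≤ ‖D (A x)‖ ^ 2 := by
  refine hs.induction ?_ (isClosed_le (by fun_prop) (by fun_prop)) x
  rintro _ ⟨X, hX, rfl⟩
  have hXA : X (A Ω) = A (X Ω) := DFunLike.congr_fun (hA X hX).eq Ω
  have hXB : X (B Ω) = B (X Ω) := DFunLike.congr_fun (hB X hX).eq Ω
  simpa only [hXA, hXB] using hle X hX

end NormedSpace

section RCLike

variable {𝕜 H : Type*} [RCLike 𝕜] [NormedAddCommGroup H] [InnerProductSpace 𝕜 H]

theorem inner_apply_smul_of_norm_eq_one (C : H →L[𝕜] H) (x : H) {t : 𝕜} (ht : ‖t‖ = 1) :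
    inner 𝕜 (t • x) (C (t • x)) = inner 𝕜 x (C x) := by
  rw [map_smul, inner_smul_left, inner_smul_right, ← mul_assoc, RCLike.conj_mul, ht]
  simp

variable [CompleteSpace H]

theorem inner_star_mul_apply (A B : H →L[𝕜] H) (x y : H) :
    inner 𝕜 x ((star A * B) y) = inner 𝕜 (A x) (B y) :=
  A.adjoint_inner_right x (B y)

theorem inner_star_mul_self_apply (C : H →L[𝕜] H) (x : H) :
    inner 𝕜 x ((star C * C) x) = ((‖C x‖ ^ 2 : ℝ) : 𝕜) := by
  rw [inner_star_mul_apply, inner_self_eq_norm_sq_to_K, RCLike.ofReal_pow]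

theorem mul_norm_sq_le_of_sum_inner_eq {ι : Type*} [Fintype ι] {p : ι → ℝ} (hp : ∀ i, 0 ≤ p i)
    {x : H} {y : ι → H} {C : H →L[𝕜] H}
    (h : ∑ i, (p i : 𝕜) * inner 𝕜 (y i) ((star C * C) (y i)) = inner 𝕜 x ((star C * C) x))
    (i : ι) : p i * ‖C (y i)‖ ^ 2 ≤ ‖C x‖ ^ 2 := by
  simp only [inner_star_mul_self_apply] at h
  have hsum : ∑ i, p i * ‖C (y i)‖ ^ 2 = ‖C x‖ ^ 2 := by exact_mod_cast h
  exact hsum ▸ Finset.single_le_sum (f := fun j ↦ p j * ‖C (y j)‖ ^ 2)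
    (fun j _ ↦ mul_nonneg (hp j) (sq_nonneg _)) (Finset.mem_univ i)

/-- The relative commutant `S' ∩ T`, as a plain subalgebra; hypothesis (C) says that it sends `Ω`
to a dense set of vectors. -/
def relativeCommutant (S T : StarSubalgebra 𝕜 (H →L[𝕜] H)) : Subalgebra 𝕜 (H →L[𝕜] H) :=
  T.toSubalgebra ⊓ Subalgebra.centralizer 𝕜 S

theorem mem_relativeCommutant {S T : StarSubalgebra 𝕜 (H →L[𝕜] H)} {X : H →L[𝕜] H} :
    X ∈ relativeCommutant S T ↔ X ∈ T ∧ ∀ Y ∈ S, X * Y = Y * X := by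
  simp only [relativeCommutant, Algebra.mem_inf, Subalgebra.mem_centralizer_iff,
    SetLike.mem_coe, StarSubalgebra.mem_toSubalgebra, eq_comm]

theorem coe_span_relativeCommutant_apply (S T : StarSubalgebra 𝕜 (H →L[𝕜] H)) (Ω : H) :
    (Submodule.span 𝕜 {x : H | ∃ X ∈ T, (∀ Y ∈ S, X * Y = Y * X) ∧ x = X Ω} : Set H) =
      (fun X : H →L[𝕜] H ↦ X Ω) '' relativeCommutant S T := by
  let orbit : Submodule 𝕜 H := (relativeCommutant S T).toSubmodule.map
    (ContinuousLinearMap.apply 𝕜 H Ω : (H →L[𝕜] H) →ₗ[𝕜] H)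
  have horbit : {x : H | ∃ X ∈ T, (∀ Y ∈ S, X * Y = Y * X) ∧ x = X Ω} = orbit := by
    ext x
    simp [orbit, mem_relativeCommutant, and_assoc, eq_comm]
  rw [horbit, Submodule.span_eq]
  rfl

/-- `ξ` is a vector with `E C ξ = ω(C) ξ` for all `C ∈ S`, where `ω(C) = ⟪Ω, C Ω⟫`. When
`E C E = ω(C) E` on `S`, these include the range of `E`; they carry vanishing at `ξ` over to `Ω`. -/
def IsCompressionVector (S : StarSubalgebra 𝕜 (H →L[𝕜] H)) (Ω : H) (E : H →L[𝕜] H) (ξ : H) :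
    Prop :=
  ∀ C ∈ S, E (C ξ) = inner 𝕜 Ω (C Ω) • ξ

theorem exists_isCompressionVector {S : StarSubalgebra 𝕜 (H →L[𝕜] H)} {Ω : H} {E : H →L[𝕜] H}
    (hE₀ : E ≠ 0) (hE : ∀ C ∈ S, E * C * E = inner 𝕜 Ω (C Ω) • E) :
    ∃ ξ ≠ 0, IsCompressionVector S Ω E ξ := by
  obtain ⟨η, hη⟩ := DFunLike.ne_iff.1 hE₀
  exact ⟨E η, hη, fun C hC ↦ DFunLike.congr_fun (hE C hC) η⟩

namespace IsCompressionVector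

variable {S : StarSubalgebra 𝕜 (H →L[𝕜] H)} {Ω ξ : H} {A B E : H →L[𝕜] H}

theorem apply_star_apply (h : IsCompressionVector S Ω E ξ) (hA : A ∈ S) (hB : B ∈ S) :
    E (star A (B ξ)) = inner 𝕜 (A Ω) (B Ω) • ξ := by
  rw [← inner_star_mul_apply]
  exact h (star A * B) (mul_mem (star_mem hA) hB)

theorem one_sub_mul_mul_star_apply (h : IsCompressionVector S Ω E ξ) (hA : A ∈ S) (hB : B ∈ S) :
    (1 - A * E * star A) (B ξ) = (B - inner 𝕜 (A Ω) (B Ω) • A) ξ := by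
  simp [h.apply_star_apply hA hB]

theorem apply_eq_zero (h : IsCompressionVector S Ω E ξ) (hξ : ξ ≠ 0) (hA : A ∈ S)
    (hAξ : A ξ = 0) : A Ω = 0 := by
  have hAΩ : inner 𝕜 (A Ω) (A Ω) • ξ = 0 := by
    rw [← h.apply_star_apply hA hA, hAξ, map_zero, map_zero]
  exact inner_self_eq_zero.1 ((smul_eq_zero.1 hAΩ).resolve_right hξ)

end IsCompressionVector

theorem eq_inner_smul_of_mul_norm_sq_le {S T : StarSubalgebra 𝕜 (H →L[𝕜] H)} (hST : S ≤ T) {Ω : H}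
    (hdense : Dense ((fun X : H →L[𝕜] H ↦ X Ω) '' relativeCommutant S T))
    (hsep : ∀ F ∈ S, F Ω = 0 → F = 0)
    {E : H →L[𝕜] H} (hET : E ∈ T) (hE₀ : E ≠ 0) (hE : ∀ C ∈ S, E * C * E = inner 𝕜 Ω (C Ω) • E)
    {A B : H →L[𝕜] H} (hA : A ∈ S) (hB : B ∈ S) (hAΩ : ‖A Ω‖ = 1) {c : ℝ} (hc : 0 < c)
    (hle : ∀ C ∈ T, c * ‖C (B Ω)‖ ^ 2 ≤ ‖C (A Ω)‖ ^ 2) :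
    B = inner 𝕜 (A Ω) (B Ω) • A := by
  obtain ⟨ξ, hξ₀, hξ⟩ := exists_isCompressionVector hE₀ hE
  let D := 1 - A * E * star A
  have hD : D ∈ T := sub_mem (one_mem T) (mul_mem (mul_mem (hST hA) hET) (star_mem (hST hA)))
  have hcomm {X F : H →L[𝕜] H} (hX : X ∈ relativeCommutant S T) (hF : F ∈ S) : Commute X F :=
    (mem_relativeCommutant.1 hX).2 F hF
  have hDle : c * ‖D (B ξ)‖ ^ 2 ≤ ‖D (A ξ)‖ ^ 2 :=
    mul_norm_sq_le_of_dense hdense (fun X hX ↦ hcomm hX hA) (fun X hX ↦ hcomm hX hB)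
      (fun X hX ↦ hle (D * X) (mul_mem hD (mem_relativeCommutant.1 hX).1)) ξ
  have hDA : D (A ξ) = 0 := by
    simp [D, hξ.one_sub_mul_mul_star_apply hA hA, inner_self_eq_norm_sq_to_K, hAΩ]
  have hDB : D (B ξ) = 0 := by
    rw [hDA, norm_zero, zero_pow two_ne_zero] at hDle
    simpa using nonpos_of_mul_nonpos_right hDle hc
  rw [hξ.one_sub_mul_mul_star_apply hA hB] at hDB
  have hmem : B - inner 𝕜 (A Ω) (B Ω) • A ∈ S := sub_mem hB (S.smul_mem hA _)
  exact sub_eq_zero.1 (hsep _ hmem (hξ.apply_eq_zero hξ₀ hmem hDB))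

theorem stmt_3_general (N : ℕ → StarSubalgebra 𝕜 (H →L[𝕜] H)) (hN : Monotone N) (Ω : H)
    (hC : ∀ n, Dense ((fun X : H →L[𝕜] H ↦ X Ω) '' relativeCommutant (N n) (N (n + 1))))
    (hS : ∀ n, ∀ A ∈ N n, A Ω = 0 → A = 0)
    (hE : ∀ n, ∃ E ∈ N (n + 1), E ≠ 0 ∧ ∀ C ∈ N n, E * C * E = inner 𝕜 Ω (C Ω) • E)
    {ι : Type*} [Fintype ι] (A : H →L[𝕜] H) (A' : ι → (H →L[𝕜] H))
    (hA : A ∈ ⋃ n, (N n : Set (H →L[𝕜] H))) (hA' : ∀ m, A' m ∈ ⋃ n, (N n : Set (H →L[𝕜] H)))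
    (hAnorm : ‖A Ω‖ = 1) (hA'norm : ∀ m, ‖A' m Ω‖ = 1)
    (p : ι → ℝ) (hp : ∀ m, 0 < p m)
    (hconv : ∀ C ∈ ⋃ n, (N n : Set (H →L[𝕜] H)),
      ∑ m, (p m : 𝕜) * inner 𝕜 (A' m Ω) (C (A' m Ω)) = inner 𝕜 (A Ω) (C (A Ω))) :
    (∀ m, ∀ C ∈ ⋃ n, (N n : Set (H →L[𝕜] H)),
      inner 𝕜 (A' m Ω) (C (A' m Ω)) = inner 𝕜 (A Ω) (C (A Ω))) ∧
    (∀ m, ∃ t : 𝕜, ‖t‖ = 1 ∧ A' m = t • A) := by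
  have hphase (m : ι) : ∃ t : 𝕜, ‖t‖ = 1 ∧ A' m = t • A := by
    obtain ⟨a, ha⟩ := Set.mem_iUnion.1 hA
    obtain ⟨b, hb⟩ := Set.mem_iUnion.1 (hA' m)
    let n := max a b
    obtain ⟨E, hEn, hE₀, hEC⟩ := hE n
    have hle (C) (hCn : C ∈ N (n + 1)) : p m * ‖C (A' m Ω)‖ ^ 2 ≤ ‖C (A Ω)‖ ^ 2 :=
      mul_norm_sq_le_of_sum_inner_eq (fun i ↦ (hp i).le)
        (hconv _ (Set.mem_iUnion_of_mem (n + 1) (mul_mem (star_mem hCn) hCn))) m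
    obtain ⟨t, hAm⟩ : ∃ t : 𝕜, A' m = t • A :=
      ⟨_, eq_inner_smul_of_mul_norm_sq_le (hN n.le_succ) (hC n) (hS n) hEn hE₀ hEC
        (hN (le_max_left a b) ha) (hN (le_max_right a b) hb) hAnorm (hp m) hle⟩
    exact ⟨t, by simpa [hAm, norm_smul, hAnorm] using hA'norm m, hAm⟩
  refine ⟨fun m C _ ↦ ?_, hphase⟩
  obtain ⟨t, ht, hAm⟩ := hphase m
  rw [hAm]
  exact inner_apply_smul_of_norm_eq_one C (A Ω) ht

end RCLike

/-- Proposition 2.4 of the paper. Under hypotheses (C), (S), (E):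
if a state `ω_A` is a convex combination `∑ p_m ω_{A_m}` with strictly positive weights,
then all `ω_{A_m}` coincide with `ω_A`; in particular each `A_m` is a unimodular scalar
multiple of `A`.  Thus the states `ω_A` are the extreme points of their convex hull. -/
theorem stmt_3 {H : Type*} [NormedAddCommGroup H] [InnerProductSpace ℂ H] [CompleteSpace H]
    [TopologicalSpace.SeparableSpace H]
    (N : ℕ → VonNeumannAlgebra H)
    (hmono : ∀ n, (N n : Set (H →L[ℂ] H)) ⊆ (N (n + 1) : Set (H →L[ℂ] H)))
    (Ω : H) (hΩ : ‖Ω‖ = 1)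
    -- Hypothesis (C)
    (hC : ∀ n : ℕ, Dense
      (Submodule.span ℂ
        {x : H | ∃ X ∈ N (n + 1), (∀ Y ∈ N n, X * Y = Y * X) ∧ x = X Ω} : Set H))
    -- Hypothesis (S)
    (hS : ∀ n : ℕ, ∀ A ∈ N n, A Ω = 0 → A = 0)
    -- Hypothesis (E)
    (hE : ∀ n : ℕ, ∃ E : H →L[ℂ] H, E ∈ N (n + 1) ∧ E ≠ 0 ∧
      IsSelfAdjoint E ∧ IsIdempotentElem E ∧
      ∀ C ∈ N n, E * C * E = ⟪Ω, C Ω⟫ • E)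
    (M : ℕ) (A : H →L[ℂ] H) (A' : Fin M → (H →L[ℂ] H))
    (hA : A ∈ ⋃ n, (N n : Set (H →L[ℂ] H)))
    (hA' : ∀ m, A' m ∈ ⋃ n, (N n : Set (H →L[ℂ] H)))
    (hAnorm : ‖A Ω‖ = 1) (hA'norm : ∀ m, ‖A' m Ω‖ = 1)
    (p : Fin M → ℝ) (hp : ∀ m, 0 < p m) (hpsum : ∑ m, p m = 1)
    (hconv : ∀ C ∈ ⋃ n, (N n : Set (H →L[ℂ] H)),
      ∑ m, (p m : ℂ) * ⟪A' m Ω, C (A' m Ω)⟫ = ⟪A Ω, C (A Ω)⟫) :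
    (∀ m, ∀ C ∈ ⋃ n, (N n : Set (H →L[ℂ] H)),
      ⟪A' m Ω, C (A' m Ω)⟫ = ⟪A Ω, C (A Ω)⟫) ∧
    (∀ m, ∃ t : ℂ, ‖t‖ = 1 ∧ A' m = t • A) :=
  stmt_3_general (fun n ↦ (N n).toStarSubalgebra) (monotone_nat_of_le_succ hmono) Ω
    (fun n ↦ coe_span_relativeCommutant_apply (N n).toStarSubalgebra _ Ω ▸ hC n) hS
    (fun n ↦ (hE n).imp fun _ ⟨hEn, hE₀, _, _, hEC⟩ ↦ ⟨hEn, hE₀, hEC⟩)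
    A A' hA hA' hAnorm hA'norm p hp hconv
end

section
/- Let H be a complex Hilbert space and let ξ, η ∈ H be unit vectors. Then sup{ |⟨ξ, C ξ⟩ − ⟨η, C η⟩| : C ∈ B(H), ‖C‖ ≤ 1 } = 2 √(1 − |⟨ξ, η⟩|²). In other words, the norm distance of the two vector states on B(H) induced by ξ and η equals 2 √(1 − |⟨ξ, η⟩|²). -/
open scoped ComplexInnerProductSpace

/-!
Multiplying `η` by a unit scalar changes neither side, so we may assume that `⟪ξ, η⟫` is real.
By polarization,
`2 (⟪ξ, C ξ⟫ - ⟪η, C η⟫) = ⟪ξ + η, C (ξ - η)⟫ + ⟪ξ - η, C (ξ + η)⟫`,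
whose norm is at most `2 ‖C‖ ‖ξ + η‖ ‖ξ - η‖`. Since
`⟪ξ + η, ξ - η⟫ = ‖ξ‖ ^ 2 - ‖η‖ ^ 2 + (⟪η, ξ⟫ - ⟪ξ, η⟫)` is real, the reflection in the line
bisecting `ξ + η` and `ξ - η` exchanges the directions of these two vectors, and so attains the
bound among the contractions.
-/

section StateDistance

open scoped InnerProductSpace
open RCLike

variable {𝕜 H : Type*} [RCLike 𝕜] [NormedAddCommGroup H] [InnerProductSpace 𝕜 H]

theorem inner_map_self_sub_inner_map_self {F : Type*} [FunLike F H H] [AddMonoidHomClass F H H]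
    (f : F) (x y : H) :
    ⟪x, f x⟫_𝕜 - ⟪y, f y⟫_𝕜 = (⟪x + y, f (x - y)⟫_𝕜 + ⟪x - y, f (x + y)⟫_𝕜) / 2 := by
  simp only [map_add, map_sub, inner_add_left, inner_sub_left, inner_add_right, inner_sub_right]
  ring

theorem norm_inner_map_self_sub_inner_map_self_le (C : H →L[𝕜] H) (x y : H) :
    ‖⟪x, C x⟫_𝕜 - ⟪y, C y⟫_𝕜‖ ≤ ‖C‖ * (‖x + y‖ * ‖x - y‖) := by
  have inner_bound (u v : H) : ‖⟪u, C v⟫_𝕜‖ ≤ ‖C‖ * (‖u‖ * ‖v‖) :=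
    calc ‖⟪u, C v⟫_𝕜‖ ≤ ‖u‖ * ‖C v‖ := norm_inner_le_norm u (C v)
      _ ≤ ‖u‖ * (‖C‖ * ‖v‖) := by gcongr; exact C.le_opNorm v
      _ = ‖C‖ * (‖u‖ * ‖v‖) := by ring
  calc ‖⟪x, C x⟫_𝕜 - ⟪y, C y⟫_𝕜‖
      = ‖⟪x + y, C (x - y)⟫_𝕜 + ⟪x - y, C (x + y)⟫_𝕜‖ / 2 := by
        rw [inner_map_self_sub_inner_map_self, norm_div, norm_two]
    _ ≤ (‖⟪x + y, C (x - y)⟫_𝕜‖ + ‖⟪x - y, C (x + y)⟫_𝕜‖) / 2 := by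
        gcongr; exact norm_add_le _ _
    _ ≤ (‖C‖ * (‖x + y‖ * ‖x - y‖) + ‖C‖ * (‖x - y‖ * ‖x + y‖)) / 2 := by
        gcongr <;> exact inner_bound _ _
    _ = ‖C‖ * (‖x + y‖ * ‖x - y‖) := by ring

theorem norm_add_mul_norm_sub_eq_two_mul_sqrt (x y : H) :
    ‖x + y‖ * ‖x - y‖ = 2 * √(((‖x‖ ^ 2 + ‖y‖ ^ 2) / 2) ^ 2 - re ⟪x, y⟫_𝕜 ^ 2) := by
  have eq_sq : ((‖x‖ ^ 2 + ‖y‖ ^ 2) / 2) ^ 2 - re ⟪x, y⟫_𝕜 ^ 2 =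
      (‖x + y‖ * ‖x - y‖ / 2) ^ 2 := by
    rw [div_pow (‖x + y‖ * ‖x - y‖), mul_pow, norm_add_sq (𝕜 := 𝕜), norm_sub_sq (𝕜 := 𝕜)]
    ring
  rw [eq_sq, Real.sqrt_sq (by positivity), mul_div_cancel₀ _ two_ne_zero]

theorem reflection_span_add_apply {u v : H} (hnorm : ‖u‖ = ‖v‖) (hinner : ⟪u, v⟫_𝕜 = ⟪v, u⟫_𝕜) :
    (𝕜 ∙ (u + v)).reflection u = v := by
  have sum_fixed : (𝕜 ∙ (u + v)).reflection (u + v) = u + v :=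
    Submodule.reflection_mem_subspace_eq_self (Submodule.mem_span_singleton_self _)
  have diff_negated : (𝕜 ∙ (u + v)).reflection (u - v) = -(u - v) := by
    refine Submodule.reflection_mem_subspace_orthogonalComplement_eq_neg ?_
    rw [Submodule.mem_orthogonal_singleton_iff_inner_right]
    simp only [inner_add_left, inner_sub_right, inner_self_eq_norm_sq_to_K, hnorm, hinner]
    ring
  have two_smul_eq : (2 : 𝕜) • (𝕜 ∙ (u + v)).reflection u = (2 : 𝕜) • v := by
    calc (2 : 𝕜) • (𝕜 ∙ (u + v)).reflection u
        = (𝕜 ∙ (u + v)).reflection (u + v) + (𝕜 ∙ (u + v)).reflection (u - v) := by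
          rw [← map_add, ← map_smul]; congr 1; module
      _ = (2 : 𝕜) • v := by rw [sum_fixed, diff_negated]; module
  exact smul_right_injective H two_ne_zero two_smul_eq

theorem inner_reflection_span_bisector {p q : H} (hinner : ⟪p, q⟫_𝕜 = ⟪q, p⟫_𝕜) :
    ⟪p, (𝕜 ∙ ((‖q‖ : 𝕜) • p + (‖p‖ : 𝕜) • q)).reflection q⟫_𝕜 = ‖p‖ * ‖q‖ := by
  obtain rfl | hp := eq_or_ne p 0
  · simp
  set R := (𝕜 ∙ ((‖q‖ : 𝕜) • p + (‖p‖ : 𝕜) • q)).reflection with hR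
  have hRq : (‖p‖ : 𝕜) • R q = (‖q‖ : 𝕜) • p := by
    rw [← map_smul, hR, add_comm]
    apply reflection_span_add_apply
    · simp only [norm_smul, norm_ofReal, abs_norm, mul_comm]
    · simp only [inner_smul_left, inner_smul_right, conj_ofReal, hinner]
      ring
  have norm_p_ne_zero : (‖p‖ : 𝕜) ≠ 0 := ofReal_ne_zero.mpr (norm_ne_zero_iff.mpr hp)
  apply mul_left_cancel₀ norm_p_ne_zero
  rw [← inner_smul_right, hRq, inner_smul_right, inner_self_eq_norm_sq_to_K]
  ring

theorem exists_inner_map_self_sub_inner_map_self_eq {x y : H} (hinner : ⟪x, y⟫_𝕜 = ⟪y, x⟫_𝕜) :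
    ∃ R : H ≃ₗᵢ[𝕜] H, ⟪x, R x⟫_𝕜 - ⟪y, R y⟫_𝕜 = ‖x + y‖ * ‖x - y‖ := by
  have hpq : ⟪x + y, x - y⟫_𝕜 = ⟪x - y, x + y⟫_𝕜 := by
    simp only [inner_add_left, inner_sub_left, inner_add_right, inner_sub_right, hinner]
    ring
  refine ⟨(𝕜 ∙ ((‖x - y‖ : 𝕜) • (x + y) + (‖x + y‖ : 𝕜) • (x - y))).reflection, ?_⟩
  rw [inner_map_self_sub_inner_map_self, inner_reflection_span_bisector hpq, add_comm (_ • _),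
    inner_reflection_span_bisector hpq.symm]
  ring

theorem isGreatest_norm_inner_map_self_sub {x y : H} (hinner : ⟪x, y⟫_𝕜 = ⟪y, x⟫_𝕜) :
    IsGreatest {r : ℝ | ∃ C : H →L[𝕜] H, ‖C‖ ≤ 1 ∧ r = ‖⟪x, C x⟫_𝕜 - ⟪y, C y⟫_𝕜‖}
      (‖x + y‖ * ‖x - y‖) := by
  constructor
  · obtain ⟨R, hR⟩ := exists_inner_map_self_sub_inner_map_self_eq hinner
    refine ⟨R.toLinearIsometry.toContinuousLinearMap,
      R.toLinearIsometry.norm_toContinuousLinearMap_le, ?_⟩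
    simp [hR]
  · rintro _ ⟨C, hC, rfl⟩
    exact (norm_inner_map_self_sub_inner_map_self_le C x y).trans
      (mul_le_of_le_one_left (by positivity) hC)

theorem inner_smul_map_smul_of_norm_eq_one_s4 {F : Type*} [FunLike F H H] [LinearMapClass F 𝕜 H H]
    {c : 𝕜} (hc : ‖c‖ = 1) (f : F) (x : H) :
    ⟪c • x, f (c • x)⟫_𝕜 = ⟪x, f x⟫_𝕜 := by
  rw [map_smul, inner_smul_left, inner_smul_right, ← mul_assoc, RCLike.conj_mul, hc,
    ofReal_one, one_pow, one_mul]

theorem stmt_4_general (ξ η : H) :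
    IsGreatest {r : ℝ | ∃ C : H →L[𝕜] H, ‖C‖ ≤ 1 ∧ r = ‖⟪ξ, C ξ⟫_𝕜 - ⟪η, C η⟫_𝕜‖}
      (2 * √(((‖ξ‖ ^ 2 + ‖η‖ ^ 2) / 2) ^ 2 - ‖⟪ξ, η⟫_𝕜‖ ^ 2)) := by
  obtain ⟨c, hc, hphase⟩ := exists_norm_eq_mul_self ⟪ξ, η⟫_𝕜
  have inner_eq_norm : ⟪ξ, c • η⟫_𝕜 = ‖⟪ξ, η⟫_𝕜‖ := by rw [inner_smul_right, hphase]
  have inner_comm : ⟪ξ, c • η⟫_𝕜 = ⟪c • η, ξ⟫_𝕜 := by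
    rw [← inner_conj_symm (c • η), inner_eq_norm, conj_ofReal]
  have h := isGreatest_norm_inner_map_self_sub inner_comm
  simpa only [inner_smul_map_smul_of_norm_eq_one_s4 hc,
    norm_add_mul_norm_sub_eq_two_mul_sqrt (𝕜 := 𝕜), inner_eq_norm, ofReal_re, norm_smul, hc,
    one_mul] using h

end StateDistance

/-- Roberts–Roepstorff identity. For unit vectors `ξ, η` of a complex
Hilbert space `H`, the norm distance of the induced vector states on `B(H)` equals
`2 √(1 − |⟨ξ, η⟩|²)`. -/
theorem stmt_4 {H : Type*} [NormedAddCommGroup H] [InnerProductSpace ℂ H] [CompleteSpace H]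
    (ξ η : H) (hξ : ‖ξ‖ = 1) (hη : ‖η‖ = 1) :
    sSup {r : ℝ | ∃ C : H →L[ℂ] H, ‖C‖ ≤ 1 ∧ r = ‖⟪ξ, C ξ⟫ - ⟪η, C η⟫‖} =
      2 * Real.sqrt (1 - ‖⟪ξ, η⟫‖ ^ 2) := by
  rw [(stmt_4_general (𝕜 := ℂ) ξ η).csSup_eq, hξ, hη]
  norm_num
end

section
/- Suppose in addition that the commutant of 𝐍 in B(H) is trivial, i.e. every bounded operator on H commuting with all elements of 𝐍 is a scalar multiple of the identity. Then for all A, B ∈ 𝐍 with ‖A Ω‖ = ‖B Ω‖ = 1 one has the equality |⟨A Ω, B Ω⟩|² = 1 − (1/4) ‖ω_A − ω_B‖², where ‖ω_A − ω_B‖ = sup{|ω_A(C) − ω_B(C)| : C ∈ 𝐍, ‖C‖ ≤ 1}. -/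
open scoped ComplexInnerProductSpace

/-!
For unit vectors `a`, `b` put `s = √(1 - ‖⟪a, b⟫‖ ^ 2)`. The difference of their vector states is
given by the operator `x ↦ ⟪a, x⟫ • a - ⟪b, x⟫ • b`, whose nonzero eigenvalues are `s` and `-s`.
Hence it equals `C ↦ ⟪u, C u⟫ - ⟪v, C v⟫` for orthogonal `u`, `v` with `‖u‖ ^ 2 + ‖v‖ ^ 2 = 2 * s`,
and its norm is at most `2 * s`.

The bound would be attained at the reflection `S` fixing `u` and negating `v`. If the commutant is
trivial, von Neumann's density argument on a finite sum of copies of `H` gives self-adjoint `T` in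
the algebra with `T u` and `T v` close to `S u` and `S v`. Clamping the spectrum of `T` to
`[-1, 1]` turns it into a contraction, and can only bring it closer to `S` on `u` and `v`, because
these are eigenvectors of `S` with eigenvalues in `[-1, 1]`; a full Kaplansky density theorem is
not needed. The clamped operator lies in the norm closure of the algebra, so it is a norm limit of
contractions in it.
-/

lemma centralizer_centralizer_eq_univ_of_forall_eq_smul_one {R A : Type*}
    [CommSemiring R] [Semiring A] [Algebra R A] {M : Set A}
    (hM : ∀ V : A, (∀ X ∈ M, V * X = X * V) → ∃ c : R, V = c • (1 : A)) :
    M.centralizer.centralizer = Set.univ := by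
  refine Set.eq_univ_of_forall fun S V hV ↦ ?_
  obtain ⟨c, rfl⟩ := hM V fun X hX ↦ (hV X hX).symm
  rw [smul_one_mul, mul_smul_one]

section Bicommutant

open ContinuousLinearMap

variable {E : Type*} [NormedAddCommGroup E] [InnerProductSpace ℂ E] [CompleteSpace E]

lemma starProjection_closure_orbit_mem_centralizer (A : StarSubalgebra ℂ (E →L[ℂ] E)) (x : E)
    (K : Submodule ℂ E) [K.HasOrthogonalProjection]
    (hK : K = (A.toSubmodule.map (apply ℂ E x).toLinearMap).topologicalClosure) :
    K.starProjection ∈ Set.centralizer (A : Set (E →L[ℂ] E)) := by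
  have invariant : ∀ T ∈ A, K ∈ Module.End.invtSubmodule T.toLinearMap := by
    intro T hT
    rw [hK]
    apply Submodule.topologicalClosure_mem_invtSubmodule
    rintro _ ⟨T', hT', rfl⟩
    exact ⟨T * T', A.mul_mem hT hT', rfl⟩
  intro T hT
  refine ((K.isIdempotentElem_starProjection.commute_iff (T := T)).2 ⟨?_, ?_⟩).symm.eq
  · simpa using invariant T hT
  · simpa using orthogonal_mem_invtSubmodule (invariant (star T) (star_mem hT))

lemma apply_mem_closure_orbit_of_mem_bicommutant (A : StarSubalgebra ℂ (E →L[ℂ] E))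
    {S : E →L[ℂ] E} (hS : S ∈ Set.centralizer (Set.centralizer (A : Set (E →L[ℂ] E)))) (x : E) :
    S x ∈ closure ((fun T : E →L[ℂ] E ↦ T x) '' A) := by
  set K := (A.toSubmodule.map (apply ℂ E x).toLinearMap).topologicalClosure with hK
  have : CompleteSpace K := (Submodule.isClosed_topologicalClosure _).completeSpace_coe
  have hx : x ∈ K := Submodule.le_topologicalClosure _ ⟨1, one_mem A, rfl⟩
  have hcomm : K.starProjection (S x) = S (K.starProjection x) :=
    congr($(hS _ (starProjection_closure_orbit_mem_centralizer A x K hK)) x)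
  rw [K.starProjection_eq_self_iff.2 hx] at hcomm
  exact K.starProjection_eq_self_iff.1 hcomm

end Bicommutant

section Amplification

open ContinuousLinearMap

variable {H ι : Type*} [NormedAddCommGroup H] [InnerProductSpace ℂ H] [CompleteSpace H] [Fintype ι]

variable (H ι) in
/-- The diagonal representation of `B(H)` on the Hilbert sum of copies of `H` indexed by `ι`. -/
noncomputable def amplification :
    (H →L[ℂ] H) →⋆ₐ[ℂ] (PiLp 2 (fun _ : ι ↦ H) →L[ℂ] PiLp 2 (fun _ : ι ↦ H)) where
  toFun T := ((PiLp.continuousLinearEquiv 2 ℂ fun _ : ι ↦ H).symm : (ι → H) →L[ℂ] _) ∘L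
    (piMap fun _ ↦ T) ∘L ((PiLp.continuousLinearEquiv 2 ℂ fun _ : ι ↦ H) : _ →L[ℂ] (ι → H))
  map_one' := rfl
  map_mul' _ _ := rfl
  map_zero' := rfl
  map_add' _ _ := rfl
  commutes' _ := rfl
  map_star' T := by
    rw [star_eq_adjoint, star_eq_adjoint, eq_adjoint_iff]
    intro x y
    simp [PiLp.inner_apply, adjoint_inner_left]

@[simp]
lemma amplification_apply (T : H →L[ℂ] H) (x : PiLp 2 (fun _ : ι ↦ H)) (i : ι) :
    amplification H ι T x i = T (x i) :=
  rfl

lemma amplification_mem_bicommutant {M : StarSubalgebra ℂ (H →L[ℂ] H)} {S : H →L[ℂ] H}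
    (hS : S ∈ Set.centralizer (Set.centralizer (M : Set (H →L[ℂ] H)))) :
    amplification H ι S ∈ Set.centralizer (Set.centralizer
      (M.map (amplification H ι) :
        Set (PiLp 2 (fun _ : ι ↦ H) →L[ℂ] PiLp 2 (fun _ : ι ↦ H)))) := by
  classical
  intro P hP
  have amplification_single (T : H →L[ℂ] H) (j : ι) (y : H) :
      amplification H ι T (PiLp.single 2 j y) = PiLp.single 2 j (T y) := by
    ext i
    rcases eq_or_ne i j with rfl | hij <;> simp [*]
  let entry (i j : ι) : H →L[ℂ] H :=
    PiLp.proj 2 (fun _ ↦ H) i ∘L P ∘L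
      ((PiLp.continuousLinearEquiv 2 ℂ fun _ : ι ↦ H).symm : (ι → H) →L[ℂ] _) ∘L
        .single ℂ (fun _ ↦ H) j
  have apply_eq_sum_entry (x : PiLp 2 (fun _ : ι ↦ H)) (i : ι) : P x i = ∑ j, entry i j (x j) := by
    have hx : x = ∑ j, PiLp.single 2 j (x j) := by
      ext i
      simp [Pi.single_apply]
    conv_lhs => rw [hx, map_sum, WithLp.ofLp_sum, Finset.sum_apply]
    rfl
  have entry_comm (i j : ι) : entry i j ∈ Set.centralizer (M : Set (H →L[ℂ] H)) := by
    intro T hT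
    ext y
    have hcomm := congr($(hP _ ⟨T, hT, rfl⟩) (PiLp.single 2 j y) i)
    exact hcomm.trans congr(P $(amplification_single T j y) i)
  ext x i
  have entry_apply_S (j : ι) : entry i j (S (x j)) = S (entry i j (x j)) :=
    congr($(hS _ (entry_comm i j)) (x j))
  simp only [mul_apply_eq_comp, amplification_apply, apply_eq_sum_entry, map_sum, entry_apply_S]

end Amplification

lemma mem_closure_of_forall_re_inner_eq_zero {E : Type*} [NormedAddCommGroup E]
    [InnerProductSpace ℂ E] [CompleteSpace E] {W : Submodule ℝ E} {z : E}
    (h : ∀ v : E, (∀ w ∈ W, (⟪v, w⟫).re = 0) → (⟪v, z⟫).re = 0) : z ∈ closure (W : Set E) := by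
  let _ := InnerProductSpace.complexToReal (G := E)
  rw [← Submodule.topologicalClosure_coe, ← Submodule.orthogonal_orthogonal_eq_closure]
  refine (Submodule.mem_orthogonal _ _).2 fun v hv ↦ h v fun w hw ↦ ?_
  exact (Submodule.mem_orthogonal' _ _).1 hv w hw

section Density

open ContinuousLinearMap

variable {H ι : Type*} [NormedAddCommGroup H] [InnerProductSpace ℂ H] [CompleteSpace H] [Fintype ι]
  {M : StarSubalgebra ℂ (H →L[ℂ] H)} {S : H →L[ℂ] H}

lemma re_sum_inner_eq_zero_of_mem_bicommutant
    (hS : S ∈ Set.centralizer (Set.centralizer (M : Set (H →L[ℂ] H)))) {v x : ι → H}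
    (h : ∀ T ∈ M, (∑ i, ⟪v i, T (x i)⟫).re = 0) : (∑ i, ⟪v i, S (x i)⟫).re = 0 := by
  have hclosed : IsClosed {y : PiLp 2 (fun _ : ι ↦ H) | (⟪WithLp.toLp 2 v, y⟫).re = 0} :=
    isClosed_eq (by fun_prop) continuous_const
  refine hclosed.closure_subset_iff.2 ?_ (apply_mem_closure_orbit_of_mem_bicommutant
    (M.map (amplification H ι)) (amplification_mem_bicommutant hS) (WithLp.toLp 2 x))
  rintro _ ⟨_, ⟨T, hT, rfl⟩, rfl⟩
  exact h T hT

lemma re_sum_inner_eq_zero_of_isSelfAdjoint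
    (hS : S ∈ Set.centralizer (Set.centralizer (M : Set (H →L[ℂ] H)))) (hSsa : IsSelfAdjoint S)
    {v x : ι → H} (h : ∀ T ∈ M, IsSelfAdjoint T → (∑ i, ⟪v i, T (x i)⟫).re = 0) :
    (∑ i, ⟪v i, S (x i)⟫).re = 0 := by
  -- Pairing `(x, v)` against `(v, x)` sees only the self-adjoint part of `T`.
  have symmetrize (T : H →L[ℂ] H) :
      (∑ i, ⟪Sum.elim v x i, T (Sum.elim x v i)⟫).re = (∑ i, ⟪v i, (T + star T) (x i)⟫).re := by
    have hswap (i : ι) : (⟪x i, T (v i)⟫).re = (⟪v i, star T (x i)⟫).re := by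
      rw [star_eq_adjoint, adjoint_inner_right, ← inner_conj_symm, Complex.conj_re]
    simp [Complex.re_sum, hswap, Finset.sum_add_distrib]
  have hdouble : (∑ i, ⟪v i, (S + star S) (x i)⟫).re = 0 := by
    rw [← symmetrize]
    refine re_sum_inner_eq_zero_of_mem_bicommutant hS fun T hT ↦ ?_
    rw [symmetrize]
    exact h _ (add_mem hT (star_mem hT)) (.add_star_self T)
  simpa [hSsa.star_eq, inner_add_right, Finset.sum_add_distrib] using hdouble

lemma exists_isSelfAdjoint_norm_apply_sub_lt {ι : Type*} [Finite ι]
    (hS : S ∈ Set.centralizer (Set.centralizer (M : Set (H →L[ℂ] H)))) (hSsa : IsSelfAdjoint S)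
    (x : ι → H) {ε : ℝ} (hε : 0 < ε) :
    ∃ T ∈ M, IsSelfAdjoint T ∧ ∀ i, ‖T (x i) - S (x i)‖ < ε := by
  cases nonempty_fintype ι
  let W : Submodule ℝ (PiLp 2 (fun _ : ι ↦ H)) :=
    (selfAdjoint.submodule ℝ (H →L[ℂ] H) ⊓ M.toSubmodule.restrictScalars ℝ).map
      (((apply ℂ _ (WithLp.toLp 2 x)).toLinearMap ∘ₗ
        (amplification H ι).toLinearMap).restrictScalars ℝ)
  have hmem : amplification H ι S (WithLp.toLp 2 x) ∈ closure (W : Set _) :=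
    mem_closure_of_forall_re_inner_eq_zero fun v hv ↦
      re_sum_inner_eq_zero_of_isSelfAdjoint hS hSsa fun T hT hTsa ↦ hv _ ⟨T, ⟨hTsa, hT⟩, rfl⟩
  obtain ⟨_, ⟨T, ⟨hTsa, hT⟩, rfl⟩, hdist⟩ := Metric.mem_closure_iff.1 hmem ε hε
  refine ⟨T, hT, hTsa, fun i ↦ ?_⟩
  rw [dist_comm, dist_eq_norm] at hdist
  exact (PiLp.norm_apply_le _ i).trans_lt hdist

end Density

section Contraction

open ContinuousLinearMap

lemma norm_apply_le_of_star_mul_self_le {𝕜 E : Type*} [RCLike 𝕜] [NormedAddCommGroup E]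
    [InnerProductSpace 𝕜 E] [CompleteSpace E] {S T : E →L[𝕜] E} (h : star S * S ≤ star T * T)
    (x : E) : ‖S x‖ ≤ ‖T x‖ := by
  have hnonneg := ((le_def _ _).1 h).re_inner_nonneg_left x
  rw [sub_apply, inner_sub_left, map_sub, sub_nonneg] at hnonneg
  refine le_of_sq_le_sq ?_ (norm_nonneg _)
  rwa [apply_norm_sq_eq_inner_adjoint_left, apply_norm_sq_eq_inner_adjoint_left]

variable {H : Type*} [NormedAddCommGroup H] [InnerProductSpace ℂ H] [CompleteSpace H]

lemma norm_cfc_apply_le {T : H →L[ℂ] H} {f g : ℝ → ℝ} (hf : ContinuousOn f (spectrum ℝ T))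
    (hg : ContinuousOn g (spectrum ℝ T)) (hfg : ∀ t ∈ spectrum ℝ T, |f t| ≤ |g t|) (x : H) :
    ‖cfc f T x‖ ≤ ‖cfc g T x‖ := by
  refine norm_apply_le_of_star_mul_self_le ?_ x
  rw [(cfc_predicate f T).star_eq, (cfc_predicate g T).star_eq, ← cfc_mul f f T, ← cfc_mul g g T]
  exact cfc_mono fun t ht ↦ abs_le_iff_mul_self_le.1 (hfg t ht)

lemma norm_cfc_apply_sub_smul_le {T : H →L[ℂ] H} (hT : IsSelfAdjoint T) {f : ℝ → ℝ}
    (hf : ContinuousOn f (spectrum ℝ T)) {c : ℝ} (hfc : ∀ t ∈ spectrum ℝ T, |f t - c| ≤ |t - c|)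
    (x : H) : ‖cfc f T x - c • x‖ ≤ ‖T x - c • x‖ := by
  have h := norm_cfc_apply_le (T := T) (f := fun t ↦ f t - c) (g := fun t ↦ t - c)
    (by fun_prop) (by fun_prop) hfc x
  rwa [cfc_sub f (fun _ ↦ c) T, cfc_sub (fun t ↦ t) (fun _ ↦ c) T, cfc_const c T, cfc_id' ℝ T,
    sub_apply, sub_apply, ContinuousLinearMap.algebraMap_apply] at h

lemma mem_closure_inter_closedBall {𝕜 V : Type*} [RCLike 𝕜] [SeminormedAddCommGroup V]
    [NormedSpace 𝕜 V] (W : Submodule 𝕜 V) {x : V} {r : ℝ} (hr : 0 < r)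
    (hx : x ∈ closure (W : Set V)) (hxr : ‖x‖ ≤ r) :
    x ∈ closure ((W : Set V) ∩ Metric.closedBall 0 r) := by
  let retract (y : V) : V := ((r / max r ‖y‖ : ℝ) : 𝕜) • y
  have hmax (y : V) : 0 < max r ‖y‖ := lt_max_of_lt_left hr
  have hcont : Continuous retract := by
    have := fun y ↦ (hmax y).ne'
    fun_prop (disch := assumption)
  have hfix : retract x = x := by simp [retract, max_eq_left hxr, hr.ne']
  rw [← hfix]
  refine map_mem_closure hcont hx fun y hy ↦ ⟨W.smul_mem _ hy, ?_⟩
  rw [mem_closedBall_zero_iff, norm_smul, RCLike.norm_ofReal, abs_of_pos (div_pos hr (hmax y)),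
    div_mul_eq_mul_div, div_le_iff₀ (hmax y)]
  gcongr
  exact le_max_right _ _

variable {M : StarSubalgebra ℂ (H →L[ℂ] H)}

lemma exists_norm_le_one_norm_apply_sub_smul_lt {S : H →L[ℂ] H}
    (hS : S ∈ Set.centralizer (Set.centralizer (M : Set (H →L[ℂ] H)))) (hSsa : IsSelfAdjoint S)
    {ι : Type*} [Finite ι] {x : ι → H} {c : ι → ℝ} (hc : ∀ i, |c i| ≤ 1)
    (hx : ∀ i, S (x i) = c i • x i) {ε : ℝ} (hε : 0 < ε) :
    ∃ C ∈ M, ‖C‖ ≤ 1 ∧ ∀ i, ‖C (x i) - c i • x i‖ < ε := by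
  obtain ⟨T, hT, hTsa, hTx⟩ := exists_isSelfAdjoint_norm_apply_sub_lt hS hSsa x hε
  let clamp (t : ℝ) : ℝ := max (-1) (min 1 t)
  have clamp_contracts (i : ι) (t : ℝ) : |clamp t - c i| ≤ |t - c i| := by
    have := abs_le.1 (hc i)
    grind
  have hclosed : IsClosed (M.topologicalClosure : Set (H →L[ℂ] H)) :=
    M.isClosed_topologicalClosure
  have hmem : cfc clamp T ∈ M.topologicalClosure :=
    cfc_mem (𝕜' := ℂ) clamp (M.le_topologicalClosure hT)
  have hnorm : ‖cfc clamp T‖ ≤ 1 :=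
    norm_cfc_le zero_le_one fun t _ ↦
      abs_le.2 ⟨le_max_left _ _, max_le (by norm_num) (min_le_left _ _)⟩
  have happrox (i : ι) : ‖cfc clamp T (x i) - c i • x i‖ < ε := by
    calc ‖cfc clamp T (x i) - c i • x i‖ ≤ ‖T (x i) - c i • x i‖ :=
          norm_cfc_apply_sub_smul_le hTsa (by fun_prop) (fun t _ ↦ clamp_contracts i t) _
      _ < ε := hx i ▸ hTx i
  have hopen : IsOpen {C : H →L[ℂ] H | ∀ i, ‖C (x i) - c i • x i‖ < ε} := by
    simp only [Set.ofPred_forall]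
    exact isOpen_iInter_of_finite fun i ↦ isOpen_lt (by fun_prop) continuous_const
  obtain ⟨C, hCx, hC, hC1⟩ := mem_closure_iff.1
    (mem_closure_inter_closedBall M.toSubmodule zero_lt_one hmem hnorm) _ hopen happrox
  exact ⟨C, hC, mem_closedBall_zero_iff.1 hC1, hCx⟩

lemma exists_norm_le_one_norm_apply_sub_lt_norm_apply_add_lt
    (hM : Set.centralizer (Set.centralizer (M : Set (H →L[ℂ] H))) = Set.univ)
    {u v : H} (huv : ⟪u, v⟫ = 0) {ε : ℝ} (hε : 0 < ε) :
    ∃ C ∈ M, ‖C‖ ≤ 1 ∧ ‖C u - u‖ < ε ∧ ‖C v + v‖ < ε := by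
  let S : H →L[ℂ] H := 2 • (ℂ ∙ u).starProjection - 1
  have hSsa : IsSelfAdjoint S :=
    (IsSelfAdjoint.smul (.all (2 : ℕ)) (isSelfAdjoint_starProjection (ℂ ∙ u))).sub (.one _)
  -- `S` unfolds to the reflection in the line `ℂ ∙ u`.
  have hSu : S u = u :=
    (ℂ ∙ u).reflection_mem_subspace_eq_self (Submodule.mem_span_singleton_self u)
  have hSv : S v = -v := (ℂ ∙ u).reflection_mem_subspace_orthogonalComplement_eq_neg
    (Submodule.mem_orthogonal_singleton_iff_inner_right.2 huv)
  obtain ⟨C, hC, hC1, hCx⟩ := exists_norm_le_one_norm_apply_sub_smul_lt (hM ▸ Set.mem_univ S) hSsa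
    (x := ![u, v]) (c := ![1, -1]) (by simp [Fin.forall_fin_two])
    (by simp [Fin.forall_fin_two, hSu, hSv]) hε
  exact ⟨C, hC, hC1, by simpa using hCx 0, by simpa using hCx 1⟩

end Contraction

section TransitionProbability

open scoped ComplexConjugate

variable {H : Type*} [NormedAddCommGroup H] [InnerProductSpace ℂ H]

lemma norm_inner_le_one_of_norm_eq_one {a b : H} (ha : ‖a‖ = 1) (hb : ‖b‖ = 1) :
    ‖⟪a, b⟫‖ ≤ 1 := by
  simpa [ha, hb] using norm_inner_le_norm (𝕜 := ℂ) a b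

lemma inner_smul_sub_smul_apply_sub (a b : H) (t : ℝ) (z : ℂ) (C : H →L[ℂ] H) :
    ⟪(t : ℂ) • a - conj z • b, C ((t : ℂ) • a - conj z • b)⟫ -
        ⟪(t : ℂ) • b - z • a, C ((t : ℂ) • b - z • a)⟫ =
      (t ^ 2 - ‖z‖ ^ 2 : ℝ) * (⟪a, C a⟫ - ⟪b, C b⟫) := by
  push_cast
  rw [← Complex.conj_mul']
  simp only [map_sub, map_smul, inner_sub_left, inner_sub_right, inner_smul_left,
    inner_smul_right, Complex.conj_conj, Complex.conj_ofReal]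
  ring

lemma norm_sq_smul_sub_inner_smul {a b : H} (ha : ‖a‖ = 1) (hb : ‖b‖ = 1) (t : ℝ) :
    ‖(t : ℂ) • a - ⟪b, a⟫ • b‖ ^ 2 = t ^ 2 - (2 * t - 1) * ‖⟪a, b⟫‖ ^ 2 := by
  have hcross : ⟪(t : ℂ) • a, ⟪b, a⟫ • b⟫ = (t * ‖⟪a, b⟫‖ ^ 2 : ℝ) := by
    rw [inner_smul_left, inner_smul_right, ← inner_conj_symm b a, Complex.conj_mul']
    push_cast [Complex.conj_ofReal]
    rfl
  rw [norm_sub_sq (𝕜 := ℂ), hcross, norm_smul, norm_smul, ha, hb, norm_inner_symm b a,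
    RCLike.re_to_complex, Complex.ofReal_re, Complex.norm_real, mul_one, mul_one,
    Real.norm_eq_abs, sq_abs]
  ring

lemma inner_smul_sub_smul_eq_zero {a b : H} (ha : ‖a‖ = 1) (hb : ‖b‖ = 1) {t : ℝ}
    (ht : t ^ 2 + ‖⟪a, b⟫‖ ^ 2 = 2 * t) :
    ⟪(t : ℂ) • a - ⟪b, a⟫ • b, (t : ℂ) • b - ⟪a, b⟫ • a⟫ = 0 := by
  have htC : (t : ℂ) ^ 2 + ⟪b, a⟫ * ⟪a, b⟫ = 2 * t := by
    rw [← inner_conj_symm, Complex.conj_mul']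
    exact_mod_cast ht
  simp only [inner_sub_left, inner_sub_right, inner_smul_left, inner_smul_right,
    Complex.conj_ofReal, inner_conj_symm, inner_self_eq_one_of_norm_eq_one, ha, hb]
  linear_combination ⟪a, b⟫ * htC

lemma inner_apply_eq_of_norm_inner_eq_one {a b : H} (ha : ‖a‖ = 1) (hb : ‖b‖ = 1)
    (hab : ‖⟪a, b⟫‖ = 1) (C : H →L[ℂ] H) : ⟪a, C a⟫ = ⟪b, C b⟫ := by
  have ha_eq : a = ⟪b, a⟫ • b := by
    have hsub := norm_sq_smul_sub_inner_smul ha hb 1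
    rw [hab, Complex.ofReal_one, one_smul] at hsub
    rw [← sub_eq_zero, ← norm_eq_zero, ← sq_eq_zero_iff, hsub]
    norm_num
  calc ⟪a, C a⟫ = ⟪⟪b, a⟫ • b, C (⟪b, a⟫ • b)⟫ := by rw [← ha_eq]
    _ = ‖⟪b, a⟫‖ ^ 2 * ⟪b, C b⟫ := by
      rw [map_smul, inner_smul_left, inner_smul_right, ← mul_assoc, Complex.conj_mul']
    _ = ⟪b, C b⟫ := by rw [norm_inner_symm, hab, Complex.ofReal_one, one_pow, one_mul]

lemma exists_orthogonal_inner_apply_sub_eq_of_pos {a b : H} (ha : ‖a‖ = 1) (hb : ‖b‖ = 1)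
    {s : ℝ} (hs : 0 < s) (hs_sq : s ^ 2 = 1 - ‖⟪a, b⟫‖ ^ 2) :
    ∃ u v : H, ⟪u, v⟫ = 0 ∧ ‖u‖ ^ 2 + ‖v‖ ^ 2 = 2 * s ∧
      ∀ C : H →L[ℂ] H, ⟪a, C a⟫ - ⟪b, C b⟫ = ⟪u, C u⟫ - ⟪v, C v⟫ := by
  -- With `t = 1 + s`, the vectors `t • a - ⟪b, a⟫ • b` and `t • b - ⟪a, b⟫ • a` are eigenvectors,
  -- for the eigenvalues `s` and `-s`, of the operator `x ↦ ⟪a, x⟫ • a - ⟪b, x⟫ • b`.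
  obtain ⟨t, ht⟩ : ∃ t, t = 1 + s := ⟨_, rfl⟩
  obtain ⟨k, hk⟩ : ∃ k : ℝ, k ^ 2 * (2 * s * t) = 1 := by
    have hpos : 0 < 2 * s * t := by subst ht; positivity
    exact ⟨(√(2 * s * t))⁻¹, by
      rw [inv_pow, Real.sq_sqrt hpos.le, inv_mul_cancel₀ hpos.ne']⟩
  refine ⟨(k : ℂ) • ((t : ℂ) • a - ⟪b, a⟫ • b), (k : ℂ) • ((t : ℂ) • b - ⟪a, b⟫ • a), ?_, ?_, ?_⟩
  · rw [inner_smul_left, inner_smul_right, inner_smul_sub_smul_eq_zero ha hb (by grind),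
      mul_zero, mul_zero]
  · have hnorm (x : H) : ‖(k : ℂ) • x‖ ^ 2 = k ^ 2 * ‖x‖ ^ 2 := by
      rw [norm_smul, mul_pow, Complex.norm_real, Real.norm_eq_abs, sq_abs]
    rw [hnorm, hnorm, norm_sq_smul_sub_inner_smul ha hb, norm_sq_smul_sub_inner_smul hb ha,
      norm_inner_symm b a]
    subst ht
    linear_combination (2 * s) * hk - 2 * k ^ 2 * (1 + 2 * s) * hs_sq
  · intro C
    have hquad (x : H) : ⟪(k : ℂ) • x, C ((k : ℂ) • x)⟫ = (k ^ 2 : ℝ) * ⟪x, C x⟫ := by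
      rw [map_smul, inner_smul_left, inner_smul_right, Complex.conj_ofReal]
      push_cast
      ring
    have hscale : k ^ 2 * (t ^ 2 - ‖⟪a, b⟫‖ ^ 2) = 1 := by
      subst ht
      linear_combination hk - k ^ 2 * hs_sq
    rw [hquad, hquad, ← mul_sub, ← inner_conj_symm b a, inner_smul_sub_smul_apply_sub, ← mul_assoc,
      ← Complex.ofReal_mul, hscale, Complex.ofReal_one, one_mul]

lemma exists_orthogonal_inner_apply_sub_eq {a b : H} (ha : ‖a‖ = 1) (hb : ‖b‖ = 1) :
    ∃ u v : H, ⟪u, v⟫ = 0 ∧ ‖u‖ ^ 2 + ‖v‖ ^ 2 = 2 * √(1 - ‖⟪a, b⟫‖ ^ 2) ∧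
      ∀ C : H →L[ℂ] H, ⟪a, C a⟫ - ⟪b, C b⟫ = ⟪u, C u⟫ - ⟪v, C v⟫ := by
  rcases (norm_inner_le_one_of_norm_eq_one ha hb).eq_or_lt with hab_eq | hab_lt
  · refine ⟨0, 0, inner_zero_left _, by simp [hab_eq], fun C ↦ ?_⟩
    simp [inner_apply_eq_of_norm_inner_eq_one ha hb hab_eq C]
  · have hpos : 0 < 1 - ‖⟪a, b⟫‖ ^ 2 :=
      sub_pos.2 (pow_lt_one₀ (norm_nonneg _) hab_lt two_ne_zero)
    exact exists_orthogonal_inner_apply_sub_eq_of_pos ha hb (Real.sqrt_pos.2 hpos)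
      (Real.sq_sqrt hpos.le)

lemma isLUB_norm_inner_apply_sub [CompleteSpace H] {M : StarSubalgebra ℂ (H →L[ℂ] H)}
    (hM : Set.centralizer (Set.centralizer (M : Set (H →L[ℂ] H))) = Set.univ)
    {u v : H} (huv : ⟪u, v⟫ = 0) :
    IsLUB {r : ℝ | ∃ C ∈ M, ‖C‖ ≤ 1 ∧ r = ‖⟪u, C u⟫ - ⟪v, C v⟫‖} (‖u‖ ^ 2 + ‖v‖ ^ 2) := by
  constructor
  · rintro _ ⟨C, -, hC, rfl⟩
    have hbound (w : H) : ‖⟪w, C w⟫‖ ≤ ‖w‖ ^ 2 := by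
      calc ‖⟪w, C w⟫‖ ≤ ‖w‖ * ‖C w‖ := norm_inner_le_norm _ _
        _ ≤ ‖w‖ * ‖w‖ := by gcongr; simpa using C.le_of_opNorm_le hC w
        _ = ‖w‖ ^ 2 := (sq _).symm
    exact (norm_sub_le _ _).trans (add_le_add (hbound u) (hbound v))
  · intro s hs
    refine le_of_forall_pos_le_add fun ε hε ↦ ?_
    set δ := ε / (‖u‖ + ‖v‖ + 1) with hδ
    obtain ⟨C, hC, hC1, hCu, hCv⟩ :=
      exists_norm_le_one_norm_apply_sub_lt_norm_apply_add_lt hM huv (ε := δ) (by positivity)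
    have hdecomp : ((‖u‖ ^ 2 + ‖v‖ ^ 2 : ℝ) : ℂ) =
        (⟪u, C u⟫ - ⟪v, C v⟫) - ⟪u, C u - u⟫ + ⟪v, C v + v⟫ := by
      rw [inner_sub_right, inner_add_right, inner_self_eq_norm_sq_to_K, inner_self_eq_norm_sq_to_K]
      push_cast [RCLike.ofReal_eq_complex_ofReal]
      ring
    calc ‖u‖ ^ 2 + ‖v‖ ^ 2 = ‖((‖u‖ ^ 2 + ‖v‖ ^ 2 : ℝ) : ℂ)‖ :=
          (Complex.norm_of_nonneg (by positivity)).symm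
      _ ≤ ‖⟪u, C u⟫ - ⟪v, C v⟫‖ + ‖⟪u, C u - u⟫‖ + ‖⟪v, C v + v⟫‖ := by
          rw [hdecomp]
          exact (norm_add_le _ _).trans (by gcongr; exact norm_sub_le _ _)
      _ ≤ s + ‖u‖ * δ + ‖v‖ * δ := by
          gcongr
          · exact hs ⟨C, hC, hC1, rfl⟩
          · exact (norm_inner_le_norm _ _).trans (by gcongr)
          · exact (norm_inner_le_norm _ _).trans (by gcongr)
      _ ≤ s + δ * (‖u‖ + ‖v‖ + 1) := by
          have : 0 < δ := by positivity
          linarith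
      _ = s + ε := by rw [hδ, div_mul_cancel₀ _ (by positivity)]

end TransitionProbability

lemma mem_iUnion_iff_mem_iSup_toStarSubalgebra {H : Type*} [NormedAddCommGroup H]
    [InnerProductSpace ℂ H] [CompleteSpace H] {N : ℕ → VonNeumannAlgebra H}
    (hmono : ∀ n, (N n : Set (H →L[ℂ] H)) ⊆ N (n + 1)) {X : H →L[ℂ] H} :
    X ∈ ⋃ n, (N n : Set (H →L[ℂ] H)) ↔ X ∈ ⨆ n, (N n).toStarSubalgebra := by
  rw [← SetLike.mem_coe, StarSubalgebra.coe_iSup_of_directed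
    (monotone_nat_of_le_succ hmono).directed_le]
  rfl

theorem stmt_6_general {H : Type*} [NormedAddCommGroup H] [InnerProductSpace ℂ H]
    [CompleteSpace H] (M : StarSubalgebra ℂ (H →L[ℂ] H))
    (htriv : ∀ V : H →L[ℂ] H, (∀ X ∈ M, V * X = X * V) → ∃ c : ℂ, V = c • (1 : H →L[ℂ] H))
    {a b : H} (ha : ‖a‖ = 1) (hb : ‖b‖ = 1) :
    ‖⟪a, b⟫‖ ^ 2 = 1 - (1 / 4) *
      (sSup {r : ℝ | ∃ C ∈ M, ‖C‖ ≤ 1 ∧ r = ‖⟪a, C a⟫ - ⟪b, C b⟫‖}) ^ 2 := by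
  obtain ⟨u, v, huv, hnorm, hdiff⟩ := exists_orthogonal_inner_apply_sub_eq ha hb
  have hlub := isLUB_norm_inner_apply_sub
    (centralizer_centralizer_eq_univ_of_forall_eq_smul_one htriv) huv
  have hsSup := hlub.csSup_eq ⟨_, 0, zero_mem M, by simp, rfl⟩
  have hsq : √(1 - ‖⟪a, b⟫‖ ^ 2) ^ 2 = 1 - ‖⟪a, b⟫‖ ^ 2 := Real.sq_sqrt <|
    sub_nonneg.2 (pow_le_one₀ (norm_nonneg _) (norm_inner_le_one_of_norm_eq_one ha hb))
  simp only [hdiff, hsSup, hnorm, mul_pow, hsq]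
  ring

/-- Proposition 3.1(ii), equality for pure `ω`. If the commutant of
`𝐍` in `B(H)` is trivial, then for all `A, B ∈ 𝐍` with `‖AΩ‖ = ‖BΩ‖ = 1` one has
`|⟨AΩ, BΩ⟩|² = 1 − (1/4) ‖ω_A − ω_B‖²`. -/
theorem stmt_6 {H : Type*} [NormedAddCommGroup H] [InnerProductSpace ℂ H] [CompleteSpace H]
    [TopologicalSpace.SeparableSpace H]
    (N : ℕ → VonNeumannAlgebra H)
    (hmono : ∀ n, (N n : Set (H →L[ℂ] H)) ⊆ (N (n + 1) : Set (H →L[ℂ] H)))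
    (Ω : H) (hΩ : ‖Ω‖ = 1)
    -- the commutant of `𝐍 = ⋃ n, N n` in `B(H)` is trivial
    (htriv : ∀ V : H →L[ℂ] H,
      (∀ X ∈ ⋃ n, (N n : Set (H →L[ℂ] H)), V * X = X * V) →
      ∃ c : ℂ, V = c • (1 : H →L[ℂ] H))
    (A B : H →L[ℂ] H)
    (hA : A ∈ ⋃ n, (N n : Set (H →L[ℂ] H)))
    (hB : B ∈ ⋃ n, (N n : Set (H →L[ℂ] H)))
    (hAnorm : ‖A Ω‖ = 1) (hBnorm : ‖B Ω‖ = 1) :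
    ‖⟪A Ω, B Ω⟫‖ ^ 2 = 1 - (1 / 4) *
      (sSup {r : ℝ | ∃ C ∈ ⋃ n, (N n : Set (H →L[ℂ] H)), ‖C‖ ≤ 1 ∧
        r = ‖⟪A Ω, C (A Ω)⟫ - ⟪B Ω, C (B Ω)⟫‖}) ^ 2 := by
  simp only [mem_iUnion_iff_mem_iSup_toStarSubalgebra hmono] at htriv ⊢
  exact stmt_6_general _ htriv hAnorm hBnorm
end

section
/- Let H be a complex Hilbert space, let N ⊆ B(H) be a subalgebra containing the identity operator, let Ω ∈ H be a unit vector, let A_1, …, A_M ∈ N satisfy ⟨A_k Ω, A_l Ω⟩ = δ_{kl}, and let r_1, …, r_M ∈ ℝ. If ∑_{m=1}^M r_m |⟨Ω, A Ω⟩|² |⟨A_m Ω, A Ω⟩|² = 0 for every A ∈ N, then r_m = 0 for all m = 1, …, M. (This is the key step showing that the GNS representation, induced by ω, of the *-algebra spanned by the states is faithful.) -/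
open scoped ComplexInnerProductSpace

/-!
On a line in a direction `y` with `φ y ≠ 0`, the linear functional `φ` vanishes at a single point,
so a function that is continuous along lines and vanishes off `ker φ` vanishes identically. With
`φ B = ⟨Ω, BΩ⟩` this removes the common factor `|⟨Ω, BΩ⟩|²` and leaves
`∑ m, r m * |⟨A m Ω, BΩ⟩|² = 0` for every `B`; by linear independence of the vectors `A m Ω`
there is a `B` at which only the `k`-th term survives.
-/

section Dual

variable {𝕜 V ι : Type*} [NontriviallyNormedField 𝕜] [AddCommGroup V] [Module 𝕜 V]

theorem eq_of_eqOn_dual_ne_zero {Y : Type*} [TopologicalSpace Y] [T2Space Y]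
    {φ : Module.Dual 𝕜 V} (hφ : φ ≠ 0) {f g : V → Y}
    (hf : ∀ x y, Continuous fun t : 𝕜 => f (x + t • y))
    (hg : ∀ x y, Continuous fun t : 𝕜 => g (x + t • y))
    (hfg : Set.EqOn f g {x | φ x ≠ 0}) : f = g := by
  obtain ⟨y, hy⟩ : ∃ y, φ y ≠ 0 := by simpa using DFunLike.ne_iff.mp hφ
  funext x
  by_cases hx : φ x = 0
  · have hline : Set.EqOn (fun t : 𝕜 => f (x + t • y)) (fun t => g (x + t • y)) {0}ᶜ := by
      intro t ht
      have hφt : φ (x + t • y) ≠ 0 := by simpa [hx, hy] using ht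
      exact hfg hφt
    simpa using congrFun (Continuous.ext_on (dense_compl_singleton 0) (hf x y) (hg x y) hline) 0
  · exact hfg hx

theorem sum_mul_norm_sq_dual_eq_zero [Fintype ι] {φ : Module.Dual 𝕜 V} (hφ : φ ≠ 0)
    {ψ : ι → Module.Dual 𝕜 V} {r : ι → ℝ}
    (h : ∀ x, ∑ m, r m * ‖φ x‖ ^ 2 * ‖ψ m x‖ ^ 2 = 0) (x : V) :
    ∑ m, r m * ‖ψ m x‖ ^ 2 = 0 := by
  have hcont (x y : V) : Continuous fun t : 𝕜 => ∑ m, r m * ‖ψ m (x + t • y)‖ ^ 2 := by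
    simp only [map_add, map_smul, smul_eq_mul]
    fun_prop
  refine congrFun (eq_of_eqOn_dual_ne_zero hφ (f := fun x => ∑ m, r m * ‖ψ m x‖ ^ 2)
    (g := fun _ => 0) hcont (fun _ _ => continuous_const) fun x (hx : φ x ≠ 0) => ?_) x
  have hfactor : ‖φ x‖ ^ 2 * ∑ m, r m * ‖ψ m x‖ ^ 2 = 0 := by
    simpa only [Finset.mul_sum, mul_left_comm, mul_assoc] using h x
  exact (mul_eq_zero.mp hfactor).resolve_left (by simpa using hx)

end Dual

theorem exists_dual_apply_ne_zero_of_linearIndependent {K V ι : Type*} [Field K] [AddCommGroup V]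
    [Module K V] [Finite ι] {ψ : ι → Module.Dual K V} (hψ : LinearIndependent K ψ) (k : ι) :
    ∃ x, ψ k x ≠ 0 ∧ ∀ m ≠ k, ψ m x = 0 := by
  by_contra! hx
  have hker : ⨅ m : {m // m ≠ k}, LinearMap.ker (ψ m) ≤ LinearMap.ker (ψ k) := by
    intro x hxker
    by_contra hxk
    obtain ⟨m, hmk, hmx⟩ := hx x hxk
    exact hmx ((Submodule.mem_iInf _).mp hxker ⟨m, hmk⟩)
  have hspan : ψ k ∈ Submodule.span K (ψ '' {m | m ≠ k}) := by
    rw [Set.image_eq_range]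
    exact mem_span_of_iInf_ker_le_ker hker
  exact hψ.notMem_span_image (by simp) hspan

theorem eq_zero_of_sum_mul_norm_sq_dual_eq_zero {𝕜 V ι : Type*} [NormedField 𝕜] [AddCommGroup V]
    [Module 𝕜 V] [Fintype ι] {ψ : ι → Module.Dual 𝕜 V} (hψ : LinearIndependent 𝕜 ψ) {r : ι → ℝ}
    (h : ∀ x, ∑ m, r m * ‖ψ m x‖ ^ 2 = 0) (k : ι) : r k = 0 := by
  obtain ⟨x, hxk, hx⟩ := exists_dual_apply_ne_zero_of_linearIndependent hψ k
  have hterm : r k * ‖ψ k x‖ ^ 2 = 0 := by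
    rw [← h x, Fintype.sum_eq_single k fun m hm => by simp [hx m hm]]
  exact (mul_eq_zero.mp hterm).resolve_right (by simpa using hxk)

section InnerProductSpace

variable {𝕜 E ι : Type*} [RCLike 𝕜] [NormedAddCommGroup E] [InnerProductSpace 𝕜 E]

theorem innerₛₗ_injective : Function.Injective (innerₛₗ 𝕜 : E → Module.Dual 𝕜 E) :=
  fun _ _ h => ext_inner_right 𝕜 (LinearMap.congr_fun h)

theorem linearIndependent_innerₛₗ {v : ι → E} (hv : LinearIndependent 𝕜 v) :
    LinearIndependent 𝕜 fun m => (innerₛₗ 𝕜 (v m) : Module.Dual 𝕜 E) :=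
  hv.map_of_injective_injectiveₛ (starRingEnd 𝕜)
    (innerₛₗ 𝕜 : E →ₗ⋆[𝕜] Module.Dual 𝕜 E).toAddMonoidHom (starRingEnd 𝕜).injective
    innerₛₗ_injective (by simp)

theorem eq_zero_of_sum_mul_norm_inner_sq_eq_zero [Fintype ι] {e : E} (he : e ≠ 0) {v : ι → E}
    (hv : LinearIndependent 𝕜 v) {r : ι → ℝ}
    (h : ∀ x, ∑ m, r m * ‖inner 𝕜 e x‖ ^ 2 * ‖inner 𝕜 (v m) x‖ ^ 2 = 0) (k : ι) : r k = 0 :=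
  have hφ : (innerₛₗ 𝕜 e : Module.Dual 𝕜 E) ≠ 0 := (map_ne_zero_iff _ innerₛₗ_injective).mpr he
  eq_zero_of_sum_mul_norm_sq_dual_eq_zero (linearIndependent_innerₛₗ hv)
    (sum_mul_norm_sq_dual_eq_zero hφ h) k

theorem stmt_13_general [Fintype ι] (N : Submodule 𝕜 (Module.End 𝕜 E)) (hN : 1 ∈ N) (Ω : E)
    (A : ι → Module.End 𝕜 E) (hA : ∀ m, A m ∈ N) (hind : LinearIndependent 𝕜 fun m => A m Ω)
    (r : ι → ℝ)
    (h : ∀ B ∈ N, ∑ m, r m * ‖inner 𝕜 Ω (B Ω)‖ ^ 2 * ‖inner 𝕜 (A m Ω) (B Ω)‖ ^ 2 = 0) :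
    ∀ m, r m = 0 := by
  intro k
  let orbit : Submodule 𝕜 E := N.map (LinearMap.applyₗ Ω)
  let e : orbit := ⟨Ω, 1, hN, rfl⟩
  let v : ι → orbit := fun m => ⟨A m Ω, A m, hA m, rfl⟩
  have he : e ≠ 0 := fun he0 => hind.ne_zero k (by simp [show Ω = 0 from congrArg Subtype.val he0])
  have hv : LinearIndependent 𝕜 v := .of_comp orbit.subtype hind
  refine eq_zero_of_sum_mul_norm_inner_sq_eq_zero he hv ?_ k
  rintro ⟨_, B, hB, rfl⟩
  exact h B hB

end InnerProductSpace

/-- key step in Proposition 4.3(ii), faithfulness of the GNS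
representation. If `A_1, …, A_M` in a unital subalgebra `N` have orthonormal vectors
`A_m Ω` and real numbers `r_m` satisfy
`∑_m r_m |⟨Ω, AΩ⟩|² |⟨A_m Ω, AΩ⟩|² = 0` for every `A ∈ N`, then all `r_m` vanish. -/
theorem stmt_13 {H : Type*} [NormedAddCommGroup H] [InnerProductSpace ℂ H] [CompleteSpace H]
    (N : Subalgebra ℂ (H →L[ℂ] H))
    (Ω : H) (hΩ : ‖Ω‖ = 1)
    (M : ℕ) (A : Fin M → (H →L[ℂ] H)) (hA : ∀ m, A m ∈ N)
    (horth : ∀ k l, ⟪A k Ω, A l Ω⟫ = if k = l then 1 else 0)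
    (r : Fin M → ℝ)
    (h : ∀ B ∈ N, ∑ m, r m * ‖⟪Ω, B Ω⟫‖ ^ 2 * ‖⟪A m Ω, B Ω⟫‖ ^ 2 = 0) :
    ∀ m, r m = 0 := by
  exact stmt_13_general (N.toSubmodule.map (ContinuousLinearMap.coeLM ℂ)) ⟨1, N.one_mem, rfl⟩ Ω
    (fun m => A m) (fun m => ⟨A m, hA m, rfl⟩) (orthonormal_iff_ite.mpr horth).linearIndependent r
    (by rintro _ ⟨B, hB, rfl⟩; exact h B hB)
end

section
/- Let H be an infinite-dimensional separable complex Hilbert space, let V ∈ B(H) be an isometry (V* V = 1), and let E = V V* be its range projection. Then there exists a sequence of isometries V_m ∈ B(H), m ∈ ℕ, with V_m V_m* = E for every m, such that V_m* → E in the strong operator topology and V_m → E in the weak operator topology. -/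
open scoped ComplexInnerProductSpace

open Filter Topology

/-!
Every isometry `V` of a separable Hilbert space is a strong limit of unitaries `U m`: a linear
isometry defined on a finite-dimensional subspace `F` extends to a unitary, since it extends to a
unitary of the finite-dimensional space `F ⊔ L F`, which acts as the identity on the complement.
Then `V_m = V * star (U m)` has range projection `V * star V`, and `star V_m = U m * star V`
tends strongly to `V * star V`. The weak convergence of `V_m` follows by passing to adjoints.
-/

section InnerProductSpace

variable {𝕜 E : Type*} [RCLike 𝕜] [NormedAddCommGroup E] [InnerProductSpace 𝕜 E]

theorem exists_linearIsometryEquiv_extending_linearIsometryEquiv {K : Submodule 𝕜 E}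
    [K.HasOrthogonalProjection] (A : K ≃ₗᵢ[𝕜] K) :
    ∃ U : E ≃ₗᵢ[𝕜] E, ∀ x : K, U x = A x := by
  let D := K.orthogonalDecomposition
  refine ⟨(D.trans (LinearIsometryEquiv.withLpProdCongr 2 A (.refl 𝕜 Kᗮ))).trans D.symm,
    fun x ↦ ?_⟩
  simp [D, LinearIsometryEquiv.withLpProdCongr]

theorem exists_linearIsometryEquiv_extending_linearIsometry {F : Submodule 𝕜 E}
    [FiniteDimensional 𝕜 F] (L : F →ₗᵢ[𝕜] E) :
    ∃ U : E ≃ₗᵢ[𝕜] E, ∀ x : F, U x = L x := by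
  let G : Submodule 𝕜 E := F ⊔ L.range
  have hFG : F ≤ G := le_sup_left
  have hLG (x : F) : L x ∈ G := le_sup_right (a := F) ⟨x, rfl⟩
  let L' : F.submoduleOf G →ₗᵢ[𝕜] G :=
    { toLinearMap := L.toLinearMap.codRestrict G hLG ∘ₗ Submodule.submoduleOfEquivOfLe hFG
      norm_map' := fun x ↦ L.norm_map _ }
  obtain ⟨U, hU⟩ := exists_linearIsometryEquiv_extending_linearIsometryEquiv
    (L'.extend.toLinearIsometryEquiv rfl)
  refine ⟨U, fun x ↦ ?_⟩
  let x' : F.submoduleOf G := ⟨⟨x, hFG x.2⟩, x.2⟩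
  exact (hU x').trans (congrArg Subtype.val (L'.extend_apply x'))

theorem exists_seq_linearIsometryEquiv_tendsto [TopologicalSpace.SeparableSpace E]
    (V : E →ₗᵢ[𝕜] E) :
    ∃ U : ℕ → (E ≃ₗᵢ[𝕜] E), ∀ x, Tendsto (fun m ↦ U m x) atTop (𝓝 (V x)) := by
  let d := TopologicalSpace.denseSeq E
  let F (m : ℕ) : Submodule 𝕜 E := Submodule.span 𝕜 (d '' Set.Iic m)
  have (m : ℕ) : FiniteDimensional 𝕜 (F m) :=
    FiniteDimensional.span_of_finite 𝕜 ((Set.finite_Iic m).image d)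
  choose U hU using fun m ↦
    exists_linearIsometryEquiv_extending_linearIsometry (V.comp (F m).subtypeₗᵢ)
  have h_equicont : Equicontinuous fun m ↦ (U m : E → E) :=
    (LipschitzWith.uniformEquicontinuous _ 1 fun m ↦ (U m).lipschitz).equicontinuous
  refine ⟨U, fun x ↦ (TopologicalSpace.denseRange_denseSeq E).induction_on x
    (h_equicont.isClosed_setOfPred_tendsto V.continuous) fun n ↦ ?_⟩
  refine tendsto_const_nhds.congr' ?_
  filter_upwards [eventually_ge_atTop n] with m hnm
  exact (hU m ⟨d n, Submodule.subset_span ⟨n, hnm, rfl⟩⟩).symm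

end InnerProductSpace

section Adjoint

open ContinuousLinearMap

variable {𝕜 E F : Type*} [RCLike 𝕜]
  [NormedAddCommGroup E] [InnerProductSpace 𝕜 E] [CompleteSpace E]
  [NormedAddCommGroup F] [InnerProductSpace 𝕜 F] [CompleteSpace F]

theorem tendsto_inner_apply_of_tendsto_adjoint_apply {ι : Type*} {l : Filter ι}
    {T : ι → E →L[𝕜] F} {S : E →L[𝕜] F} {y : F}
    (h : Tendsto (fun i ↦ adjoint (T i) y) l (𝓝 (adjoint S y))) (x : E) :
    Tendsto (fun i ↦ inner 𝕜 y (T i x)) l (𝓝 (inner 𝕜 y (S x))) := by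
  simpa only [adjoint_inner_left] using h.inner (tendsto_const_nhds (x := x)) (𝕜 := 𝕜)

theorem exists_seq_unitary_tendsto_of_star_mul_self_eq_one [TopologicalSpace.SeparableSpace E]
    {V : E →L[𝕜] E} (hV : star V * V = 1) :
    ∃ U : ℕ → unitary (E →L[𝕜] E),
      ∀ x, Tendsto (fun m ↦ (U m : E →L[𝕜] E) x) atTop (𝓝 (V x)) := by
  obtain ⟨U, hU⟩ := exists_seq_linearIsometryEquiv_tendsto
    ⟨V.toLinearMap, V.norm_map_iff_adjoint_comp_self.mpr hV⟩
  exact ⟨fun m ↦ Unitary.linearIsometryEquiv.symm (U m), hU⟩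

theorem stmt_15_general [TopologicalSpace.SeparableSpace E]
    (V : E →L[𝕜] E) (hV : star V * V = 1) :
    ∃ Vm : ℕ → (E →L[𝕜] E),
      (∀ m, star (Vm m) * Vm m = 1) ∧
      (∀ m, Vm m * star (Vm m) = V * star V) ∧
      (∀ x : E, Tendsto (fun m ↦ star (Vm m) x) atTop (𝓝 ((V * star V) x))) ∧
      (∀ x y : E, Tendsto (fun m ↦ inner 𝕜 y (Vm m x)) atTop (𝓝 (inner 𝕜 y ((V * star V) x)))) := by
  obtain ⟨U, hU⟩ := exists_seq_unitary_tendsto_of_star_mul_self_eq_one hV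
  let Vm (m : ℕ) : E →L[𝕜] E := V * star (U m : E →L[𝕜] E)
  have star_Vm (m : ℕ) : star (Vm m) = U m * star V := by simp only [Vm, star_mul, star_star]
  have h_strong (x : E) : Tendsto (fun m ↦ star (Vm m) x) atTop (𝓝 ((V * star V) x)) := by
    simp only [star_Vm]
    exact hU (star V x)
  have h_adjoint : adjoint (V * star V) = V * star V := IsSelfAdjoint.mul_star_self V
  refine ⟨Vm, fun m ↦ ?_, fun m ↦ ?_, h_strong, fun x y ↦
    tendsto_inner_apply_of_tendsto_adjoint_apply (h_adjoint.symm ▸ h_strong y) x⟩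
  · calc star (Vm m) * Vm m = U m * (star V * V) * star (U m : E →L[𝕜] E) := by
          simp only [star_Vm, Vm, mul_assoc]
      _ = 1 := by rw [hV, mul_one, Unitary.mul_star_self_of_mem (U m).2]
  · calc Vm m * star (Vm m) = V * (star (U m : E →L[𝕜] E) * U m) * star V := by
          simp only [star_Vm, Vm, mul_assoc]
      _ = V * star V := by rw [Unitary.star_mul_self_of_mem (U m).2, mul_one]

end Adjoint

/-- Lemma 5.1(ii) for `B(H)`. For an isometry `V` on an
infinite-dimensional separable complex Hilbert space with range projection `E = V V*`,
there are isometries `V_m` with the same range projection `E` such that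
`V_m* → E` strongly and `V_m ⇀ E` weakly. -/
theorem stmt_15 {H : Type*} [NormedAddCommGroup H] [InnerProductSpace ℂ H] [CompleteSpace H]
    [TopologicalSpace.SeparableSpace H]
    (hinf : ¬ FiniteDimensional ℂ H)
    (V : H →L[ℂ] H) (hV : star V * V = 1) :
    ∃ Vm : ℕ → (H →L[ℂ] H),
      (∀ m, star (Vm m) * Vm m = 1) ∧
      (∀ m, Vm m * star (Vm m) = V * star V) ∧
      (∀ x : H, Tendsto (fun m => (star (Vm m)) x) atTop (𝓝 ((V * star V) x))) ∧
      (∀ x y : H, Tendsto (fun m => ⟪y, (Vm m) x⟫) atTop (𝓝 ⟪y, (V * star V) x⟫)) :=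
  stmt_15_general V hV
end

section
/- Let H be a complex Hilbert space, let M ⊆ B(H) be a *-subalgebra, let Ω ∈ H, and let E ∈ B(H) be a nonzero orthogonal projection satisfying E C E = ⟨Ω, C Ω⟩ • E for all C ∈ M. Then for every Z ∈ M one has ‖E Z‖ = ‖Z* Ω‖. -/
open scoped ComplexInnerProductSpace

section CStarRing

variable {A : Type*} [NonUnitalNormedRing A] [StarRing A] [CStarRing A]

theorem norm_eq_one_of_isStarProjection {e : A} (he : IsStarProjection e) (he0 : e ≠ 0) :
    ‖e‖ = 1 := by
  have norm_sq : ‖e‖ ^ 2 = ‖e‖ := by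
    rw [← he.isSelfAdjoint.norm_mul_self, he.isIdempotentElem.eq]
  exact (eq_zero_or_one_of_sq_eq_self norm_sq).resolve_left (norm_ne_zero_iff.mpr he0)

theorem norm_mul_sq_of_isSelfAdjoint {e : A} (he : IsSelfAdjoint e) (a : A) :
    ‖e * a‖ ^ 2 = ‖e * (a * star a) * e‖ := by
  rw [sq, ← CStarRing.norm_self_mul_star, star_mul, he.star_eq]
  simp only [mul_assoc]

end CStarRing

section Hilbert

variable {𝕜 H K : Type*} [RCLike 𝕜]
  [NormedAddCommGroup H] [InnerProductSpace 𝕜 H] [CompleteSpace H]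
  [NormedAddCommGroup K] [InnerProductSpace 𝕜 K] [CompleteSpace K]

theorem inner_apply_adjoint_apply_self (T : K →L[𝕜] H) (x : H) :
    inner 𝕜 x (T (T.adjoint x)) = (‖T.adjoint x‖ : 𝕜) ^ 2 := by
  rw [← T.adjoint_inner_left, inner_self_eq_norm_sq_to_K]

-- The factor `√‖E‖` is needed for `E = |Ω⟩⟨Ω|` with `Ω` not a unit vector, which satisfies `hE` for
-- every `Z`.
theorem stmt_17_general (Z E : H →L[𝕜] H) (Ω : H) (hEsa : IsSelfAdjoint E)
    (hE : E * (Z * star Z) * E = inner 𝕜 Ω ((Z * star Z) Ω) • E) :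
    ‖E * Z‖ = √‖E‖ * ‖(star Z) Ω‖ := by
  have compression : E * (Z * star Z) * E = (‖(star Z) Ω‖ : 𝕜) ^ 2 • E :=
    hE.trans (congrArg (· • E) (inner_apply_adjoint_apply_self Z Ω))
  refine (sq_eq_sq₀ (by positivity) (by positivity)).mp ?_
  calc ‖E * Z‖ ^ 2 = ‖E * (Z * star Z) * E‖ := norm_mul_sq_of_isSelfAdjoint hEsa Z
    _ = ‖(star Z) Ω‖ ^ 2 * ‖E‖ := by
      rw [compression, norm_smul, norm_pow, RCLike.norm_ofReal, abs_norm]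
    _ = (√‖E‖ * ‖(star Z) Ω‖) ^ 2 := by
      rw [mul_pow, Real.sq_sqrt (norm_nonneg E), mul_comm]

end Hilbert

/-- auxiliary identity in the proof of Proposition 2.2. If a nonzero
orthogonal projection `E` satisfies `E C E = ⟨Ω, CΩ⟩ • E` for all `C` in a *-subalgebra
`M ⊆ B(H)`, then `‖E Z‖ = ‖Z* Ω‖` for every `Z ∈ M`. -/
theorem stmt_17 {H : Type*} [NormedAddCommGroup H] [InnerProductSpace ℂ H] [CompleteSpace H]
    (M : StarSubalgebra ℂ (H →L[ℂ] H))
    (Ω : H)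
    (E : H →L[ℂ] H) (hE0 : E ≠ 0) (hEsa : IsSelfAdjoint E) (hEidem : IsIdempotentElem E)
    (hE : ∀ C ∈ M, E * C * E = ⟪Ω, C Ω⟫ • E) :
    ∀ Z ∈ M, ‖E * Z‖ = ‖(star Z) Ω‖ := by
  intro Z hZ
  rw [stmt_17_general Z E Ω hEsa (hE _ (mul_mem hZ (star_mem hZ))),
    norm_eq_one_of_isStarProjection ⟨hEidem, hEsa⟩ hE0, Real.sqrt_one, one_mul]
end

section
/- Let H be a complex Hilbert space, let M ⊆ B(H) be a *-subalgebra, let Ω ∈ H be a unit vector, and let E ∈ B(H) be a nonzero orthogonal projection satisfying E C E = ⟨Ω, C Ω⟩ • E for all C ∈ M. Let A ∈ M with ⟨Ω, A A* Ω⟩ ≠ 0. Then F := ⟨Ω, A A* Ω⟩⁻¹ • A* E A is an orthogonal projection, and F C F = (⟨Ω, A C A* Ω⟩ / ⟨Ω, A A* Ω⟩) • F for every C ∈ M. -/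
open scoped ComplexInnerProductSpace

/-!
Write `φ(C) = ⟨Ω, C Ω⟩`. Substituting `E (A C A*) E = φ(A C A*) • E` into
`(A* E A) C (A* E A) = A* (E (A C A*) E) A` gives the compression identity, and the same computation
without `C` gives idempotency of `F`. For self-adjointness, `φ(A A*) • E = E (A A*) E` is
self-adjoint, so `φ(A A*)` acts on `E` as a real scalar.
-/

section Compression

variable {𝕜 R : Type*} [Semifield 𝕜] [NonUnitalSemiring R] [Module 𝕜 R]
  [IsScalarTower 𝕜 R R] [SMulCommClass 𝕜 R R] {c d : 𝕜} {a b e x : R}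

theorem isIdempotentElem_inv_smul_mul_mul (hc : c ≠ 0) (h : e * (a * b) * e = c • e) :
    IsIdempotentElem (c⁻¹ • (b * e * a)) := by
  have hsq : (b * e * a) * (b * e * a) = c • (b * e * a) := calc
    (b * e * a) * (b * e * a) = b * (e * (a * b) * e) * a := by simp only [mul_assoc]
    _ = c • (b * e * a) := by rw [h, mul_smul_comm, smul_mul_assoc]
  rw [IsIdempotentElem, smul_mul_smul_comm, hsq, mul_smul, inv_smul_smul₀ hc]

theorem smul_mul_mul_compress (h : e * (a * x * b) * e = d • e) :
    (c • (b * e * a)) * x * (c • (b * e * a)) = (d * c) • (c • (b * e * a)) := by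
  have hcompress : (b * e * a) * x * (b * e * a) = d • (b * e * a) := calc
    (b * e * a) * x * (b * e * a) = b * (e * (a * x * b) * e) * a := by simp only [mul_assoc]
    _ = d • (b * e * a) := by rw [h, mul_smul_comm, smul_mul_assoc]
  rw [smul_mul_assoc, smul_mul_smul_comm, hcompress, smul_smul, smul_smul]
  congr 1
  ring

end Compression

section StarCompression

variable {𝕜 R : Type*} [Semifield 𝕜] [StarRing 𝕜]

theorem isSelfAdjoint_inv_smul [AddCommMonoid R] [StarAddMonoid R] [Module 𝕜 R] [StarModule 𝕜 R]
    {c : 𝕜} {e : R} (he : IsSelfAdjoint e) (hce : IsSelfAdjoint (c • e)) :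
    IsSelfAdjoint (c⁻¹ • e) := by
  obtain rfl | hc := eq_or_ne c 0
  · rw [inv_zero, zero_smul]
    exact .zero R
  have hreal : star c • e = c • e := by
    rw [← hce.star_eq, star_smul, he.star_eq]
  calc star (c⁻¹ • e) = (star c)⁻¹ • e := by rw [star_smul, star_inv₀, he.star_eq]
    _ = (star c)⁻¹ • c⁻¹ • c • e := by rw [inv_smul_smul₀ hc]
    _ = c⁻¹ • (star c)⁻¹ • star c • e := by rw [smul_comm, hreal]
    _ = c⁻¹ • e := by rw [inv_smul_smul₀ (star_ne_zero.mpr hc)]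

variable [NonUnitalSemiring R] [StarRing R] [Module 𝕜 R] [StarModule 𝕜 R]
  [IsScalarTower 𝕜 R R] [SMulCommClass 𝕜 R R]

theorem isStarProjection_inv_smul_star_mul_mul {c : 𝕜} {a e : R} (hc : c ≠ 0)
    (he : IsSelfAdjoint e) (h : e * (a * star a) * e = c • e) :
    IsStarProjection (c⁻¹ • (star a * e * a)) where
  isIdempotentElem := isIdempotentElem_inv_smul_mul_mul hc h
  isSelfAdjoint := by
    have hce : IsSelfAdjoint (c • e) := h ▸ (IsSelfAdjoint.mul_star_self a).conjugate_self he
    rw [← smul_mul_assoc, ← mul_smul_comm]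
    exact (isSelfAdjoint_inv_smul he hce).conjugate' a

theorem stmt_18_general {S : Type*} [SetLike S R] [MulMemClass S R] [StarMemClass S R]
    (M : S) (φ : R → 𝕜) {e a : R} (he : IsSelfAdjoint e)
    (hφ : ∀ x ∈ M, e * x * e = φ x • e) (ha : a ∈ M) (hφa : φ (a * star a) ≠ 0) :
    IsStarProjection ((φ (a * star a))⁻¹ • (star a * e * a)) ∧
    ∀ x ∈ M,
      ((φ (a * star a))⁻¹ • (star a * e * a)) * x * ((φ (a * star a))⁻¹ • (star a * e * a)) =
        (φ (a * x * star a) / φ (a * star a)) • ((φ (a * star a))⁻¹ • (star a * e * a)) := by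
  refine ⟨isStarProjection_inv_smul_star_mul_mul hφa he
    (hφ _ (mul_mem ha (star_mem ha))), fun x hx ↦ ?_⟩
  rw [div_eq_mul_inv]
  exact smul_mul_mul_compress (hφ _ (mul_mem (mul_mem ha hx) (star_mem ha)))

end StarCompression

/-- auxiliary claim in the proof of Proposition 2.4. If a nonzero
orthogonal projection `E` satisfies `E C E = ⟨Ω, CΩ⟩ • E` for all `C` in a *-subalgebra
`M ⊆ B(H)`, and `A ∈ M` has `⟨Ω, A A* Ω⟩ ≠ 0`, then
`F = ⟨Ω, A A* Ω⟩⁻¹ • (A* E A)` is an orthogonal projection and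
`F C F = (⟨Ω, A C A* Ω⟩ / ⟨Ω, A A* Ω⟩) • F` for every `C ∈ M`. -/
theorem stmt_18 {H : Type*} [NormedAddCommGroup H] [InnerProductSpace ℂ H] [CompleteSpace H]
    (M : StarSubalgebra ℂ (H →L[ℂ] H))
    (Ω : H) (hΩ : ‖Ω‖ = 1)
    (E : H →L[ℂ] H) (hE0 : E ≠ 0) (hEsa : IsSelfAdjoint E) (hEidem : IsIdempotentElem E)
    (hE : ∀ C ∈ M, E * C * E = ⟪Ω, C Ω⟫ • E)
    (A : H →L[ℂ] H) (hA : A ∈ M)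
    (hAΩ : ⟪Ω, (A * star A) Ω⟫ ≠ 0) :
    IsSelfAdjoint ((⟪Ω, (A * star A) Ω⟫)⁻¹ • (star A * E * A)) ∧
    IsIdempotentElem ((⟪Ω, (A * star A) Ω⟫)⁻¹ • (star A * E * A)) ∧
    ∀ C ∈ M,
      ((⟪Ω, (A * star A) Ω⟫)⁻¹ • (star A * E * A)) * C *
          ((⟪Ω, (A * star A) Ω⟫)⁻¹ • (star A * E * A)) =
        (⟪Ω, (A * C * star A) Ω⟫ / ⟪Ω, (A * star A) Ω⟫) •
          ((⟪Ω, (A * star A) Ω⟫)⁻¹ • (star A * E * A)) := by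
  have ⟨hF, hcompress⟩ := stmt_18_general M (fun C ↦ ⟪Ω, C Ω⟫) hEsa hE hA hAΩ
  exact ⟨hF.isSelfAdjoint, hF.isIdempotentElem, hcompress⟩
end
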